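/- Let a > 0 with a ≠ 1 and let s > a/4. Then there exists a constant C > 0, independent of f, such that for every f ∈ C_c^∞(ℝ \ {0}) one has ‖S^a f‖_{L²(ℝ, L^∞(B))} ≤ C ‖f‖_{H^s(ℝ)}. -/

import Mathlib

open MeasureTheory Real

noncomputable section

/-- The one-dimensional Fourier transform `f̂(ξ) = ∫ e^{-i x ξ} f(x) dx`. -/
def FT1 (f : ℝ → ℂ) (ξ : ℝ) : ℂ :=
  ∫ x, Complex.exp (-(Complex.I * (x * ξ : ℝ))) * f x

/-- The oscillatory integral `S^a f(x,t) = (2π)⁻¹ ∫ e^{i(xξ + t|ξ|^a)} f̂(ξ) dξ`. -/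
def Sosc1 (a : ℝ) (f : ℝ → ℂ) (x t : ℝ) : ℂ :=
  ((2 * π : ℝ) : ℂ)⁻¹ * ∫ ξ, Complex.exp (Complex.I * ((x * ξ + t * |ξ| ^ a : ℝ) : ℂ)) * FT1 f ξ

/-- The van der Corput second derivative test, for an amplitude vanishing at the endpoints. -/
theorem norm_integral_exp_mul_le_of_le_deriv2 {θ u v φ φ' : ℝ → ℝ} {α β κ A B : ℝ}
    (hαβ : α ≤ β) (hκ : 0 < κ) (hθ : ∀ η ∈ Set.Icc α β, HasDerivAt θ (u η) η)
    (hu : ∀ η ∈ Set.Icc α β, HasDerivAt u (v η) η) (hv : ContinuousOn v (Set.Icc α β))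
    (hφ : ∀ η ∈ Set.Icc α β, HasDerivAt φ (φ' η) η) (hφ' : ContinuousOn φ' (Set.Icc α β))
    (hvκ : ∀ η ∈ Set.Icc α β, κ ≤ v η) (hA : ∀ η ∈ Set.Icc α β, |φ η| ≤ A)
    (hB : ∀ η ∈ Set.Icc α β, |φ' η| ≤ B) (hα : φ α = 0) (hβ : φ β = 0) :
    ‖∫ η in α..β, Complex.exp (Complex.I * θ η) * φ η‖ ≤ (2 * π * A + B * (β - α)) / √κ := by
  have hA0 : 0 ≤ A := (abs_nonneg _).trans (hA α ⟨le_rfl, hαβ⟩)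
  have hB0 : 0 ≤ B := (abs_nonneg _).trans (hB α ⟨le_rfl, hαβ⟩)
  have hpos : ∀ η, 0 < u η ^ 2 + κ := fun η => by positivity
  have hsκ : 0 < √κ := Real.sqrt_pos.2 hκ
  set E : ℝ → ℂ := fun η => Complex.exp (Complex.I * θ η) with hE
  set G : ℝ → ℝ := fun η => u η * φ η / (u η ^ 2 + κ) with hG
  set G' : ℝ → ℝ := fun η =>
    ((v η * φ η + u η * φ' η) * (u η ^ 2 + κ) - u η * φ η * (2 * u η * v η)) / (u η ^ 2 + κ) ^ 2
    with hG'
  have cθ : ContinuousOn θ (Set.Icc α β) := fun η h => (hθ η h).continuousAt.continuousWithinAt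
  have cu : ContinuousOn u (Set.Icc α β) := fun η h => (hu η h).continuousAt.continuousWithinAt
  have cφ : ContinuousOn φ (Set.Icc α β) := fun η h => (hφ η h).continuousAt.continuousWithinAt
  have cE : ContinuousOn E (Set.Icc α β) := by
    have := Complex.continuous_ofReal.comp_continuousOn cθ
    exact Complex.continuous_exp.comp_continuousOn (continuousOn_const.mul this)
  have cG : ContinuousOn G (Set.Icc α β) :=
    (cu.mul cφ).div ((cu.pow 2).add continuousOn_const) fun η _ => (hpos η).ne'
  have cG' : ContinuousOn G' (Set.Icc α β) := by
    refine ContinuousOn.div ?_ (((cu.pow 2).add continuousOn_const).pow 2)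
      fun η _ => (pow_pos (hpos η) 2).ne'
    exact (((hv.mul cφ).add (cu.mul hφ')).mul ((cu.pow 2).add continuousOn_const)).sub
      ((cu.mul cφ).mul ((continuousOn_const.mul cu).mul hv))
  have dG : ∀ η ∈ Set.Icc α β, HasDerivAt G (G' η) η := by
    intro η h
    have h1 := (((hu η h).mul (hφ η h)).div (((hu η h).pow 2).add_const κ) (hpos η).ne')
    refine h1.congr_deriv ?_
    simp [hG']
  have dE : ∀ η ∈ Set.Icc α β, HasDerivAt E (E η * (Complex.I * u η)) η := by
    intro η h
    exact ((hθ η h).ofReal_comp.const_mul Complex.I).cexp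
  set D : ℝ → ℂ := fun η =>
    -Complex.I * ((G' η : ℂ) * E η + G η * (E η * (Complex.I * u η))) with hD
  have dF : ∀ η ∈ Set.uIcc α β, HasDerivAt (fun η => -Complex.I * ((G η : ℂ) * E η)) (D η) η := by
    intro η h
    rw [Set.uIcc_of_le hαβ] at h
    exact ((dG η h).ofReal_comp.mul (dE η h)).const_mul _
  have cofG := Complex.continuous_ofReal.comp_continuousOn cG
  have cofG' := Complex.continuous_ofReal.comp_continuousOn cG'
  have cofu := Complex.continuous_ofReal.comp_continuousOn cu
  have cofφ := Complex.continuous_ofReal.comp_continuousOn cφ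
  have cD : ContinuousOn D (Set.Icc α β) :=
    continuousOn_const.mul ((cofG'.mul cE).add (cofG.mul (cE.mul (continuousOn_const.mul cofu))))
  have iD : IntervalIntegrable D volume α β :=
    ContinuousOn.intervalIntegrable (by rwa [Set.uIcc_of_le hαβ])
  have iE : IntervalIntegrable (fun η => E η * (φ η : ℂ)) volume α β :=
    ContinuousOn.intervalIntegrable (by rw [Set.uIcc_of_le hαβ]; exact cE.mul cofφ)
  have hint0 : ∫ η in α..β, D η = 0 := by
    rw [intervalIntegral.integral_eq_sub_of_hasDerivAt dF iD]
    simp [hG, hα, hβ]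
  have hrepr : ∫ η in α..β, E η * (φ η : ℂ) = ∫ η in α..β, (E η * (φ η : ℂ) - D η) := by
    rw [intervalIntegral.integral_sub iE iD, hint0, sub_zero]
  have hat : ∀ η ∈ Set.uIcc α β,
      HasDerivAt (fun η => Real.arctan (u η / √κ) / √κ) (v η / (u η ^ 2 + κ)) η := by
    intro η h
    rw [Set.uIcc_of_le hαβ] at h
    refine (((hu η h).div_const (√κ)).arctan.div_const (√κ)).congr_deriv ?_
    have := hpos η
    have h2 : √κ ^ 2 = κ := Real.sq_sqrt hκ.le
    have h3 : 1 + (u η / √κ) ^ 2 = (u η ^ 2 + κ) / κ := by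
      rw [div_pow, h2]; field_simp; ring
    rw [h3]
    field_simp
    rw [h2]
    ring
  have cat : ContinuousOn (fun η => v η / (u η ^ 2 + κ)) (Set.Icc α β) :=
    hv.div ((cu.pow 2).add continuousOn_const) fun η _ => (hpos η).ne'
  have iat : IntervalIntegrable (fun η => v η / (u η ^ 2 + κ)) volume α β :=
    ContinuousOn.intervalIntegrable (by rwa [Set.uIcc_of_le hαβ])
  have hat_le : ∫ η in α..β, v η / (u η ^ 2 + κ) ≤ π / √κ := by
    rw [intervalIntegral.integral_eq_sub_of_hasDerivAt hat iat, ← sub_div]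
    gcongr
    linarith [Real.arctan_lt_pi_div_two (u β / √κ), Real.neg_pi_div_two_lt_arctan (u α / √κ)]
  have nE : ∀ η, ‖E η‖ = 1 := fun η => by
    simp only [hE]; rw [mul_comm]; exact Complex.norm_exp_ofReal_mul_I _
  have key : ∀ η ∈ Set.Icc α β,
      ‖E η * (φ η : ℂ) - D η‖ ≤ 2 * A * (v η / (u η ^ 2 + κ)) + B / √κ := by
    intro η h
    have hp := hpos η
    have e1 : E η * (φ η : ℂ) - D η =
        E η * (((φ η * κ / (u η ^ 2 + κ) : ℝ) : ℂ) + Complex.I * (G' η : ℝ)) := by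
      have : (φ η * κ / (u η ^ 2 + κ) : ℝ) = φ η - G η * u η := by
        simp only [hG]; field_simp; ring
      rw [this]
      simp only [hD]
      push_cast
      linear_combination (E η * G η * u η) * Complex.I_sq
    rw [e1, norm_mul, nE, one_mul]
    refine (norm_add_le _ _).trans ?_
    rw [norm_mul, Complex.norm_I, one_mul, Complex.norm_real, Complex.norm_real, Real.norm_eq_abs,
      Real.norm_eq_abs]
    have hvpos : 0 < v η := hκ.trans_le (hvκ η h)
    have b1 : |φ η * κ / (u η ^ 2 + κ)| ≤ A * (v η / (u η ^ 2 + κ)) := by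
      rw [abs_div, abs_mul, abs_of_pos hκ, abs_of_pos hp, mul_div_assoc]
      gcongr
      · exact hA η h
      · exact hvκ η h
    have e2 : G' η = φ η * (v η * (κ - u η ^ 2) / (u η ^ 2 + κ) ^ 2)
        + φ' η * (u η / (u η ^ 2 + κ)) := by
      simp only [hG']; field_simp; ring
    have b2 : |v η * (κ - u η ^ 2) / (u η ^ 2 + κ) ^ 2| ≤ v η / (u η ^ 2 + κ) := by
      rw [abs_div, abs_mul, abs_of_pos hvpos, abs_of_pos (pow_pos hp 2), div_le_div_iff₀ (by positivity) hp]
      have : |κ - u η ^ 2| ≤ u η ^ 2 + κ := by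
        rw [abs_le]; constructor <;> nlinarith [sq_nonneg (u η)]
      calc v η * |κ - u η ^ 2| * (u η ^ 2 + κ) ≤ v η * (u η ^ 2 + κ) * (u η ^ 2 + κ) := by gcongr
        _ = _ := by ring
    have b3 : |u η / (u η ^ 2 + κ)| ≤ 1 / √κ := by
      rw [abs_div, abs_of_pos hp, div_le_div_iff₀ hp hsκ]
      nlinarith [sq_nonneg (|u η| - √κ), Real.sq_sqrt hκ.le, sq_abs (u η), sq_nonneg (u η),
        abs_nonneg (u η)]
    have b4 : |G' η| ≤ A * (v η / (u η ^ 2 + κ)) + B * (1 / √κ) := by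
      rw [e2]
      refine (abs_add_le _ _).trans ?_
      rw [abs_mul, abs_mul]
      gcongr
      · exact hA η h
      · exact hB η h
    calc _ ≤ _ := add_le_add b1 b4
      _ = _ := by ring
  rw [hrepr]
  refine (intervalIntegral.norm_integral_le_of_norm_le hαβ
    (Filter.Eventually.of_forall fun η h => key η (Set.Ioc_subset_Icc_self h))
    ((iat.const_mul _).add (intervalIntegrable_const))).trans ?_
  rw [intervalIntegral.integral_add (iat.const_mul _) intervalIntegrable_const,
    intervalIntegral.integral_const_mul, intervalIntegral.integral_const, smul_eq_mul]
  calc _ ≤ 2 * A * (π / √κ) + (β - α) * (B / √κ) := by gcongr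
    _ = _ := by ring

/-- One integration by parts against a phase whose derivative does not vanish. -/
theorem integral_exp_mul_eq_of_deriv_ne_zero {p q ψ ψ₁ : ℝ → ℝ} {α β y : ℝ}
    (hαβ : α ≤ β) (hy : y ≠ 0) (hp : ∀ η ∈ Set.Icc α β, HasDerivAt p (q η) η)
    (hq : ∀ η ∈ Set.Icc α β, q η ≠ 0) (hqc : ContinuousOn q (Set.Icc α β))
    (hψ : ∀ η ∈ Set.Icc α β, HasDerivAt (fun η => ψ η / q η) (ψ₁ η) η)
    (hψ₁ : ContinuousOn ψ₁ (Set.Icc α β)) (hα : ψ α = 0) (hβ : ψ β = 0) :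
    ∫ η in α..β, Complex.exp (Complex.I * ((y * p η : ℝ) : ℂ)) * ψ η =
      Complex.I / y * ∫ η in α..β, Complex.exp (Complex.I * ((y * p η : ℝ) : ℂ)) * ψ₁ η := by
  have hy' : (y : ℂ) ≠ 0 := by exact_mod_cast hy
  set E : ℝ → ℂ := fun η => Complex.exp (Complex.I * ((y * p η : ℝ) : ℂ)) with hE
  have cp : ContinuousOn p (Set.Icc α β) := fun η h => (hp η h).continuousAt.continuousWithinAt
  have cE : ContinuousOn E (Set.Icc α β) := by
    have := Complex.continuous_ofReal.comp_continuousOn (continuousOn_const.mul cp : ContinuousOn (fun η => y * p η) _)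
    exact Complex.continuous_exp.comp_continuousOn (continuousOn_const.mul this)
  have cψq : ContinuousOn (fun η => ψ η / q η) (Set.Icc α β) :=
    fun η h => (hψ η h).continuousAt.continuousWithinAt
  have cψ : ContinuousOn ψ (Set.Icc α β) :=
    (cψq.mul hqc).congr fun η h => by simp [div_mul_cancel₀ _ (hq η h)]
  have dE : ∀ η ∈ Set.Icc α β, HasDerivAt E (E η * (Complex.I * ((y * q η : ℝ) : ℂ))) η := by
    intro η h
    exact (((hp η h).const_mul y).ofReal_comp.const_mul Complex.I).cexp
  have cofψ := Complex.continuous_ofReal.comp_continuousOn cψ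
  have cofψ₁ := Complex.continuous_ofReal.comp_continuousOn hψ₁
  have i1 : IntervalIntegrable (fun η => E η * (ψ η : ℂ)) volume α β :=
    ContinuousOn.intervalIntegrable (by rw [Set.uIcc_of_le hαβ]; exact cE.mul cofψ)
  have i2 : IntervalIntegrable (fun η => E η * (ψ₁ η : ℂ)) volume α β :=
    ContinuousOn.intervalIntegrable (by rw [Set.uIcc_of_le hαβ]; exact cE.mul cofψ₁)
  have dF : ∀ η ∈ Set.uIcc α β, HasDerivAt (fun η => (-Complex.I / y) * (E η * ((ψ η / q η : ℝ) : ℂ)))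
      (E η * ψ η - Complex.I / y * (E η * ψ₁ η)) η := by
    intro η h
    rw [Set.uIcc_of_le hαβ] at h
    refine (((dE η h).mul (hψ η h).ofReal_comp).const_mul (-Complex.I / y)).congr_deriv ?_
    have hq' : (q η : ℂ) ≠ 0 := by exact_mod_cast hq η h
    push_cast
    field_simp
    linear_combination (-(E η * y * ψ η : ℂ)) * Complex.I_sq
  have := intervalIntegral.integral_eq_sub_of_hasDerivAt dF (i1.sub (i2.const_mul _))
  rw [intervalIntegral.integral_sub i1 (i2.const_mul _), intervalIntegral.integral_const_mul] at this
  rw [sub_eq_iff_eq_add] at this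
  rw [this]
  simp only [hα, hβ, zero_div, Complex.ofReal_zero, mul_zero, sub_zero, zero_add]
  rfl

/-- Quadratic decay of oscillatory integrals without stationary points. -/
theorem norm_integral_exp_mul_le_inv_sq {p q q' q'' φ φ' φ'' : ℝ → ℝ} {α β y A D : ℝ}
    (hαβ : α ≤ β) (hy : y ≠ 0) (hp : ∀ η ∈ Set.Icc α β, HasDerivAt p (q η) η)
    (hq : ∀ η ∈ Set.Icc α β, HasDerivAt q (q' η) η)
    (hq' : ∀ η ∈ Set.Icc α β, HasDerivAt q' (q'' η) η) (hq'' : ContinuousOn q'' (Set.Icc α β))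
    (hφ : ∀ η ∈ Set.Icc α β, HasDerivAt φ (φ' η) η)
    (hφ' : ∀ η ∈ Set.Icc α β, HasDerivAt φ' (φ'' η) η) (hφ'' : ContinuousOn φ'' (Set.Icc α β))
    (hq2 : ∀ η ∈ Set.Icc α β, 1 / 2 ≤ q η) (hA : ∀ η ∈ Set.Icc α β, |φ η| ≤ A)
    (hA' : ∀ η ∈ Set.Icc α β, |φ' η| ≤ A) (hA'' : ∀ η ∈ Set.Icc α β, |φ'' η| ≤ A)
    (hD : ∀ η ∈ Set.Icc α β, |q' η| ≤ D) (hD' : ∀ η ∈ Set.Icc α β, |q'' η| ≤ D)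
    (hα : φ α = 0) (hβ : φ β = 0) (hα' : φ' α = 0) (hβ' : φ' β = 0) :
    ‖∫ η in α..β, Complex.exp (Complex.I * ((y * p η : ℝ) : ℂ)) * φ η‖ ≤
      (4 * A + 32 * A * D + 48 * A * D ^ 2) * (β - α) / y ^ 2 := by
  have hA0 : 0 ≤ A := (abs_nonneg _).trans (hA α ⟨le_rfl, hαβ⟩)
  have hD0 : 0 ≤ D := (abs_nonneg _).trans (hD α ⟨le_rfl, hαβ⟩)
  have hq0 : ∀ η ∈ Set.Icc α β, q η ≠ 0 := fun η h => by have := hq2 η h; positivity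
  have cq : ContinuousOn q (Set.Icc α β) := fun η h => (hq η h).continuousAt.continuousWithinAt
  have cq' : ContinuousOn q' (Set.Icc α β) := fun η h => (hq' η h).continuousAt.continuousWithinAt
  have cφ : ContinuousOn φ (Set.Icc α β) := fun η h => (hφ η h).continuousAt.continuousWithinAt
  have cφ' : ContinuousOn φ' (Set.Icc α β) := fun η h => (hφ' η h).continuousAt.continuousWithinAt
  set ψ₁ : ℝ → ℝ := fun η => (φ' η * q η - φ η * q' η) / q η ^ 2 with hψ₁
  set ψ₂ : ℝ → ℝ := fun η => φ'' η * (q η)⁻¹ ^ 2 - 3 * (φ' η * q' η) * (q η)⁻¹ ^ 3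
    - φ η * q'' η * (q η)⁻¹ ^ 3 + 3 * φ η * q' η ^ 2 * (q η)⁻¹ ^ 4 with hψ₂
  have cqi : ContinuousOn (fun η => (q η)⁻¹) (Set.Icc α β) := cq.inv₀ hq0
  have cψ₁ : ContinuousOn ψ₁ (Set.Icc α β) :=
    ((cφ'.mul cq).sub (cφ.mul cq')).div (cq.pow 2) fun η h => pow_ne_zero 2 (hq0 η h)
  have cψ₂ : ContinuousOn ψ₂ (Set.Icc α β) := by
    simp only [hψ₂]
    fun_prop
  have d1 : ∀ η ∈ Set.Icc α β, HasDerivAt (fun η => φ η / q η) (ψ₁ η) η :=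
    fun η h => (hφ η h).div (hq η h) (hq0 η h)
  have d2 : ∀ η ∈ Set.Icc α β, HasDerivAt (fun η => ψ₁ η / q η) (ψ₂ η) η := by
    intro η h
    have h0 := hq0 η h
    refine (((((hφ' η h).mul (hq η h)).sub ((hφ η h).mul (hq' η h))).div ((hq η h).pow 2)
      (pow_ne_zero 2 h0)).div (hq η h) h0).congr_deriv ?_
    simp only [hψ₂, Pi.sub_apply, Pi.mul_apply, Pi.pow_apply, Pi.div_apply]
    field_simp
    push_cast
    ring
  rw [integral_exp_mul_eq_of_deriv_ne_zero hαβ hy hp hq0 cq d1 cψ₁ hα hβ,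
    integral_exp_mul_eq_of_deriv_ne_zero hαβ hy hp hq0 cq d2 cψ₂ (by simp [hψ₁, hα, hα'])
      (by simp [hψ₁, hβ, hβ'])]
  have bound : ∀ η ∈ Set.uIoc α β, ‖Complex.exp (Complex.I * ((y * p η : ℝ) : ℂ)) * ψ₂ η‖ ≤
      4 * A + 32 * A * D + 48 * A * D ^ 2 := by
    intro η h
    rw [Set.uIoc_of_le hαβ] at h
    replace h := Set.Ioc_subset_Icc_self h
    rw [norm_mul, mul_comm Complex.I, Complex.norm_exp_ofReal_mul_I, one_mul, Complex.norm_real,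
      Real.norm_eq_abs]
    have hqp : 0 < q η := by linarith [hq2 η h]
    have hi : (q η)⁻¹ ≤ 2 := by
      rw [inv_le_comm₀ hqp two_pos]; linarith [hq2 η h]
    have hi0 : 0 ≤ (q η)⁻¹ := inv_nonneg.2 hqp.le
    have t1 : |φ'' η * (q η)⁻¹ ^ 2| ≤ A * 2 ^ 2 := by
      rw [abs_mul, abs_of_nonneg (pow_nonneg hi0 2)]; gcongr; exact hA'' η h
    have t2 : |3 * (φ' η * q' η) * (q η)⁻¹ ^ 3| ≤ 3 * (A * D) * 2 ^ 3 := by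
      rw [abs_mul, abs_of_nonneg (pow_nonneg hi0 3), abs_mul, abs_mul,
        abs_of_pos (by norm_num : (0:ℝ) < 3)]
      gcongr
      · exact hA' η h
      · exact hD η h
    have t3 : |φ η * q'' η * (q η)⁻¹ ^ 3| ≤ A * D * 2 ^ 3 := by
      rw [abs_mul, abs_of_nonneg (pow_nonneg hi0 3), abs_mul]
      gcongr
      · exact hA η h
      · exact hD' η h
    have t4 : |3 * φ η * q' η ^ 2 * (q η)⁻¹ ^ 4| ≤ 3 * A * D ^ 2 * 2 ^ 4 := by
      rw [abs_mul, abs_of_nonneg (pow_nonneg hi0 4), abs_mul, abs_mul, abs_pow,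
        abs_of_pos (by norm_num : (0:ℝ) < 3)]
      gcongr
      · exact hA η h
      · exact hD η h
    calc |ψ₂ η| ≤ A * 2 ^ 2 + 3 * (A * D) * 2 ^ 3 + A * D * 2 ^ 3 + 3 * A * D ^ 2 * 2 ^ 4 :=
          (abs_add_le _ _).trans (add_le_add ((abs_sub _ _).trans (add_le_add
            ((abs_sub _ _).trans (add_le_add t1 t2)) t3)) t4)
      _ = _ := by ring
  have := intervalIntegral.norm_integral_le_of_norm_le_const bound
  rw [abs_of_nonneg (sub_nonneg.2 hαβ)] at this
  rw [norm_mul, norm_mul, norm_div, Complex.norm_I, Complex.norm_real, Real.norm_eq_abs]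
  calc _ = (1 / |y| * (1 / |y|)) * ‖∫ η in α..β, Complex.exp (Complex.I * ((y * p η : ℝ) : ℂ)) * ψ₂ η‖ := by ring
    _ ≤ (1 / |y| * (1 / |y|)) * ((4 * A + 32 * A * D + 48 * A * D ^ 2) * (β - α)) := by gcongr
    _ = _ := by rw [← sq_abs y]; field_simp

/-- A smooth bump equal to one on `[1, 2]` and supported in `[1/2, 5/2]`. -/
def annulusBump : ContDiffBump (3 / 2 : ℝ) := ⟨1 / 2, 1, by norm_num, by norm_num⟩

/-- The frequency localized oscillatory kernel at unit scale. -/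
def unitKernel (a y l : ℝ) : ℂ :=
  ∫ η : ℝ, Complex.exp (Complex.I * ((y * η + l * |η| ^ a : ℝ) : ℂ)) * (annulusBump η : ℝ)

theorem annulusBump_eq_zero {η : ℝ} (h : η ≤ 1 / 2 ∨ 5 / 2 ≤ η) : annulusBump η = 0 := by
  apply annulusBump.zero_of_le_dist
  rw [Real.dist_eq]
  change (1 : ℝ) ≤ _
  rcases h with h | h
  · rw [abs_of_nonpos (by linarith)]; linarith
  · rw [abs_of_nonneg (by linarith)]; linarith

theorem annulusBump_eq_one {η : ℝ} (h1 : 1 ≤ η) (h2 : η ≤ 2) : annulusBump η = 1 := by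
  apply annulusBump.one_of_mem_closedBall
  rw [Metric.mem_closedBall, Real.dist_eq, abs_le]
  change -(1 / 2 : ℝ) ≤ _ ∧ _ ≤ (1 / 2 : ℝ)
  constructor <;> linarith

theorem unitKernel_eq (a y l : ℝ) : unitKernel a y l =
    ∫ η in (1 / 4 : ℝ)..3, Complex.exp (Complex.I * ((y * η + l * η ^ a : ℝ) : ℂ)) *
      (annulusBump η : ℝ) := by
  rw [unitKernel, ← intervalIntegral.integral_eq_integral_of_support_subset (a := 1 / 4) (b := 3)]
  · refine intervalIntegral.integral_congr fun η h => ?_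
    rw [Set.uIcc_of_le (by norm_num)] at h
    simp only [abs_of_nonneg (show 0 ≤ η by linarith [h.1])]
  · intro η h
    by_contra h'
    apply h
    simp only
    rw [annulusBump_eq_zero, Complex.ofReal_zero, mul_zero]
    by_contra hc
    push Not at hc
    exact h' ⟨by linarith [hc.1], by linarith [hc.2]⟩

theorem norm_unitKernel_neg (a y l : ℝ) : ‖unitKernel a (-y) (-l)‖ = ‖unitKernel a y l‖ := by
  rw [← Complex.norm_conj (unitKernel a y l)]
  congr 1
  rw [unitKernel, unitKernel, ← integral_conj]
  congr 1
  ext η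
  rw [map_mul, ← Complex.exp_conj, map_mul, Complex.conj_I, Complex.conj_ofReal, Complex.conj_ofReal]
  congr 2
  push_cast
  ring

theorem exists_unitKernel_bounds {a : ℝ} (ha : 0 < a) (ha1 : a ≠ 1) :
    ∃ C > 0, ∃ M ≥ 1, ∀ y l : ℝ, ‖unitKernel a y l‖ ≤ C ∧
      (y ≠ 0 → M * |l| ≤ |y| → ‖unitKernel a y l‖ ≤ C / y ^ 2) ∧
      (l ≠ 0 → ‖unitKernel a y l‖ ≤ C / √|l|) := by
  have h43 : (1 / 4 : ℝ) ≤ 3 := by norm_num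
  set S := Set.Icc (1 / 4 : ℝ) 3 with hS
  have hSpos : ∀ η ∈ S, 0 < η := fun η h => by linarith [h.1]
  have hcpow : ∀ b : ℝ, ContinuousOn (fun η : ℝ => η ^ b) S := fun b =>
    continuousOn_id.rpow_const fun η h => Or.inl (hSpos η h).ne'
  have hdpow : ∀ b : ℝ, ∀ η ∈ S, HasDerivAt (fun η : ℝ => η ^ b) (b * η ^ (b - 1)) η :=
    fun b η h => Real.hasDerivAt_rpow_const (Or.inl (hSpos η h).ne')
  have hbpow : ∀ b : ℝ, ∃ c, 0 < c ∧ ∀ η ∈ S, η ^ b ≤ c := by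
    intro b
    obtain ⟨c, hc⟩ := isCompact_Icc.exists_bound_of_continuousOn (hcpow b)
    refine ⟨max c 1, by positivity, fun η h => ?_⟩
    exact ((le_abs_self _).trans (hc η h)).trans (le_max_left _ _)
  -- bounds on the bump
  set φ : ℝ → ℝ := ⇑annulusBump with hφdef
  have hφs : ContDiff ℝ (⊤ : ℕ∞) φ := annulusBump.contDiff
  have hφds : ContDiff ℝ (⊤ : ℕ∞) (deriv φ) := (contDiff_infty_iff_deriv.1 hφs).2
  have hφdds : ContDiff ℝ (⊤ : ℕ∞) (deriv (deriv φ)) := (contDiff_infty_iff_deriv.1 hφds).2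
  have dφ : ∀ η, HasDerivAt φ (deriv φ η) η := fun η =>
    ((hφs.differentiable (by simp)) η).hasDerivAt
  have dφ' : ∀ η, HasDerivAt (deriv φ) (deriv (deriv φ) η) η := fun η =>
    ((hφds.differentiable (by simp)) η).hasDerivAt
  have hφ14 : φ (1 / 4) = 0 := annulusBump_eq_zero (Or.inl (by norm_num))
  have hφ3 : φ 3 = 0 := annulusBump_eq_zero (Or.inr (by norm_num))
  have hφ14' : deriv φ (1 / 4) = 0 := by
    have : φ =ᶠ[nhds (1 / 4)] fun _ => 0 := by
      filter_upwards [Iio_mem_nhds (show (1 / 4 : ℝ) < 1 / 2 by norm_num)] with η hη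
      exact annulusBump_eq_zero (Or.inl (le_of_lt hη))
    rw [this.deriv_eq]; simp
  have hφ3' : deriv φ 3 = 0 := by
    have : φ =ᶠ[nhds 3] fun _ => 0 := by
      filter_upwards [Ioi_mem_nhds (show (5 / 2 : ℝ) < 3 by norm_num)] with η hη
      exact annulusBump_eq_zero (Or.inr (le_of_lt hη))
    rw [this.deriv_eq]; simp
  obtain ⟨A0, hA0⟩ := isCompact_Icc.exists_bound_of_continuousOn (hφs.continuous.continuousOn (s := S))
  obtain ⟨A1, hA1⟩ := isCompact_Icc.exists_bound_of_continuousOn (hφds.continuous.continuousOn (s := S))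
  obtain ⟨A2, hA2⟩ := isCompact_Icc.exists_bound_of_continuousOn (hφdds.continuous.continuousOn (s := S))
  set A := max 1 (max A0 (max A1 A2)) with hA
  have hApos : 0 < A := by positivity
  have bA0 : ∀ η ∈ S, |φ η| ≤ A := fun η h => (hA0 η h).trans (by simp [hA])
  have bA1 : ∀ η ∈ S, |deriv φ η| ≤ A := fun η h => (hA1 η h).trans (by simp [hA])
  have bA2 : ∀ η ∈ S, |deriv (deriv φ) η| ≤ A := fun η h => (hA2 η h).trans (by simp [hA])
  -- bounds on the phase
  obtain ⟨c1, hc1, hb1⟩ := hbpow (a - 1)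
  obtain ⟨c2, hc2, hb2⟩ := hbpow (a - 2)
  obtain ⟨c3, hc3, hb3⟩ := hbpow (a - 3)
  obtain ⟨c4, hc4, hb4⟩ := hbpow (2 - a)
  set M := max 1 (2 * a * c1) with hM
  have hM1 : 1 ≤ M := le_max_left _ _
  have haa : 0 < |a * (a - 1)| := abs_pos.2 (mul_ne_zero ha.ne' (sub_ne_zero.2 ha1))
  set D := max (|a * (a - 1)| * c2) (|a * (a - 1) * (a - 2)| * c3) with hD
  set κ₀ := |a * (a - 1)| / c4 with hκ₀
  have hκ₀pos : 0 < κ₀ := by positivity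
  set C1 := A * (3 - 1 / 4)
  set C2 := (4 * A + 32 * A * D + 48 * A * D ^ 2) * (3 - 1 / 4)
  set C3 := (2 * π * A + A * (3 - 1 / 4)) / √κ₀
  have hD0 : 0 ≤ D := le_max_of_le_left (by positivity)
  refine ⟨max C1 (max C2 C3), by positivity, M, hM1, fun y l => ⟨?_, ?_, ?_⟩⟩
  · refine le_trans ?_ (le_max_left _ _)
    rw [unitKernel_eq]
    have := intervalIntegral.norm_integral_le_of_norm_le_const (a := 1 / 4) (b := 3) (C := A)
      (f := fun η => Complex.exp (Complex.I * ((y * η + l * η ^ a : ℝ) : ℂ)) * (annulusBump η : ℝ)) ?_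
    · rwa [abs_of_nonneg (by norm_num)] at this
    · intro η h
      rw [Set.uIoc_of_le h43] at h
      rw [norm_mul, mul_comm Complex.I, Complex.norm_exp_ofReal_mul_I, one_mul, Complex.norm_real]
      exact bA0 η (Set.Ioc_subset_Icc_self h)
  · intro hy hl
    refine le_trans ?_ (div_le_div_of_nonneg_right ((le_max_left C2 C3).trans (le_max_right _ _)) (sq_nonneg y))
    rw [unitKernel_eq]
    set μ := l / y with hμ
    have hμM : |μ| * M ≤ 1 := by
      rw [hμ, abs_div, div_mul_eq_mul_div, div_le_one (abs_pos.2 hy)]; linarith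
    have hμ1 : |μ| ≤ 1 := by nlinarith [abs_nonneg μ]
    have e : ∀ η : ℝ, y * η + l * η ^ a = y * (η + μ * η ^ a) := fun η => by
      rw [hμ]; field_simp
    simp only [e]
    refine norm_integral_exp_mul_le_inv_sq (p := fun η => η + μ * η ^ a)
      (q := fun η => 1 + μ * (a * η ^ (a - 1)))
      (q' := fun η => μ * (a * ((a - 1) * η ^ (a - 2))))
      (q'' := fun η => μ * (a * ((a - 1) * ((a - 2) * η ^ (a - 3)))))
      (φ := φ) (φ' := deriv φ) (φ'' := deriv (deriv φ)) h43 hy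
      (fun η h => (hasDerivAt_id η).add ((hdpow a η h).const_mul μ)) ?_ ?_
      ?_ (fun η _ => dφ η) (fun η _ => dφ' η) hφdds.continuous.continuousOn ?_ bA0 bA1 bA2 ?_ ?_
      hφ14 hφ3 hφ14' hφ3'
    · intro η h
      have := (((hdpow (a - 1) η h).const_mul a).const_mul μ).const_add 1
      rwa [show a - 1 - 1 = a - 2 by ring] at this
    · intro η h
      have := ((((hdpow (a - 2) η h).const_mul (a - 1)).const_mul a).const_mul μ)
      rwa [show a - 2 - 1 = a - 3 by ring] at this
    · have := hcpow (a - 3)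
      fun_prop
    · intro η h
      have h1 : 0 ≤ η ^ (a - 1) := Real.rpow_nonneg (hSpos η h).le _
      have h2 : |μ * (a * η ^ (a - 1))| ≤ 1 / 2 := by
        rw [abs_mul, abs_of_nonneg (by positivity : 0 ≤ a * η ^ (a - 1))]
        calc |μ| * (a * η ^ (a - 1)) ≤ |μ| * (a * c1) := by gcongr; exact hb1 η h
          _ = |μ| * (2 * a * c1) / 2 := by ring
          _ ≤ |μ| * M / 2 := by gcongr; exact le_max_right _ _
          _ ≤ 1 / 2 := by gcongr
      linarith [(abs_le.1 h2).1]
    · intro η h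
      have h1 : 0 ≤ η ^ (a - 2) := Real.rpow_nonneg (hSpos η h).le _
      calc |μ * (a * ((a - 1) * η ^ (a - 2)))| = |μ| * (|a * (a - 1)| * η ^ (a - 2)) := by
            rw [← mul_assoc a, abs_mul, abs_mul (a * (a - 1)), abs_of_nonneg h1]
        _ ≤ 1 * (|a * (a - 1)| * c2) := by gcongr; exact hb2 η h
        _ ≤ D := by rw [one_mul]; exact le_max_left _ _
    · intro η h
      have h1 : 0 ≤ η ^ (a - 3) := Real.rpow_nonneg (hSpos η h).le _
      calc |μ * (a * ((a - 1) * ((a - 2) * η ^ (a - 3))))|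
            = |μ| * (|a * (a - 1) * (a - 2)| * η ^ (a - 3)) := by
            rw [← mul_assoc a, ← mul_assoc (a * (a - 1)), abs_mul, abs_mul (a * (a - 1) * (a - 2)),
              abs_of_nonneg h1]
        _ ≤ 1 * (|a * (a - 1) * (a - 2)| * c3) := by gcongr; exact hb3 η h
        _ ≤ D := by rw [one_mul]; exact le_max_right _ _
  · intro hl
    refine le_trans ?_ (div_le_div_of_nonneg_right ((le_max_right C2 C3).trans (le_max_right C1 _))
      (sqrt_nonneg _))
    wlog hsgn : 0 < l * (a * (a - 1)) generalizing y l with H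
    · have := H (-y) (-l) (neg_ne_zero.2 hl) (by
        have : l * (a * (a - 1)) ≠ 0 :=
          mul_ne_zero hl (mul_ne_zero ha.ne' (sub_ne_zero.2 ha1))
        have := lt_of_le_of_ne (not_lt.1 hsgn) this
        linarith)
      rwa [norm_unitKernel_neg, abs_neg] at this
    rw [unitKernel_eq]
    have hl' : 0 < |l| := abs_pos.2 hl
    have := norm_integral_exp_mul_le_of_le_deriv2 (θ := fun η => y * η + l * η ^ a)
      (u := fun η => y + l * (a * η ^ (a - 1))) (v := fun η => l * (a * ((a - 1) * η ^ (a - 2))))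
      (φ := φ) (φ' := deriv φ) (κ := |l| * κ₀) (A := A) (B := A) h43 (by positivity)
      (fun η h => (((hasDerivAt_id η).const_mul y).add ((hdpow a η h).const_mul l)).congr_deriv
        (by simp))
      (fun η h => by
        have := (((hdpow (a - 1) η h).const_mul a).const_mul l).const_add y
        rwa [show a - 1 - 1 = a - 2 by ring] at this)
      (by
        have := hcpow (a - 2)
        fun_prop) (fun η _ => dφ η) hφds.continuous.continuousOn ?_ bA0 bA1 hφ14 hφ3
    · refine this.trans (le_of_eq ?_)
      rw [Real.sqrt_mul hl'.le, div_div, mul_comm (√κ₀)]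
    · intro η h
      have h1 : 0 < η ^ (a - 2) := Real.rpow_pos_of_pos (hSpos η h) _
      have h2 : c4⁻¹ ≤ η ^ (a - 2) := by
        rw [inv_le_comm₀ hc4 h1, ← Real.rpow_neg (hSpos η h).le, neg_sub]
        exact hb4 η h
      calc |l| * κ₀ = |l * (a * (a - 1))| * c4⁻¹ := by rw [hκ₀, abs_mul l]; ring
        _ ≤ |l * (a * (a - 1))| * η ^ (a - 2) := by gcongr
        _ = _ := by rw [abs_of_pos hsgn]; ring

/-- The spatial profile dominating the rescaled kernels. -/
def kernelProfile (u : ℝ) : ℝ := if |u| ≤ 1 then (√|u|)⁻¹ else (u ^ 2)⁻¹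

theorem kernelProfile_nonneg (u : ℝ) : 0 ≤ kernelProfile u := by
  unfold kernelProfile; split_ifs <;> positivity

theorem measurable_kernelProfile : Measurable kernelProfile := by
  unfold kernelProfile
  exact Measurable.ite (measurableSet_le (by fun_prop) (by fun_prop)) (by fun_prop) (by fun_prop)

theorem exists_unitKernel_le_profile {a : ℝ} (ha : 0 < a) (ha1 : a ≠ 1) :
    ∃ C > 0, ∃ M ≥ 1, ∀ T ≥ 1, ∀ y l : ℝ, y ≠ 0 → |l| ≤ T →
      ‖unitKernel a y l‖ ≤ C / √T * kernelProfile (y / (M * T)) := by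
  obtain ⟨C, hC, M, hM, H⟩ := exists_unitKernel_bounds ha ha1
  refine ⟨C, hC, M, hM, fun T hT y l hy hl => ?_⟩
  obtain ⟨h0, h1, h2⟩ := H y l
  have hT0 : 0 < T := by linarith
  have hM0 : 0 < M := by linarith
  have hy0 : 0 < |y| := abs_pos.2 hy
  have hL : 0 < M * T := by positivity
  have habs : |y / (M * T)| = |y| / (M * T) := by rw [abs_div, abs_of_pos hL]
  have hsM : 1 ≤ √M := Real.one_le_sqrt.2 hM
  have hsT : 1 ≤ √T := Real.one_le_sqrt.2 hT
  unfold kernelProfile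
  simp only [habs, div_le_one hL]
  split_ifs with hyL
  · have e : C / √T * (√(|y| / (M * T)))⁻¹ = C * √M / √|y| := by
      rw [Real.sqrt_div hy0.le, Real.sqrt_mul hM0.le]
      have := Real.sqrt_pos.2 hy0
      field_simp
    rw [e]
    by_cases hMl : M * |l| ≤ |y|
    · have h3 : ‖unitKernel a y l‖ ≤ C / √|y| := by
        by_cases hy1 : |y| ≤ 1
        · refine h0.trans ?_
          rw [le_div_iff₀ (Real.sqrt_pos.2 hy0)]
          have : √|y| ≤ 1 := Real.sqrt_le_one.2 hy1
          nlinarith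
        · refine (h1 hy hMl).trans ?_
          push Not at hy1
          rw [← sq_abs y]
          gcongr
          rw [Real.sqrt_le_left (by positivity)]
          nlinarith [pow_le_pow_right₀ hy1.le (show 1 ≤ 4 by norm_num)]
      refine h3.trans ?_
      gcongr
      nlinarith
    · push Not at hMl
      have hl0 : 0 < |l| := by
        by_contra h
        have : |l| = 0 := le_antisymm (not_lt.1 h) (abs_nonneg _)
        rw [this, mul_zero] at hMl
        linarith
      refine (h2 (abs_pos.1 hl0)).trans ?_
      rw [div_le_div_iff₀ (Real.sqrt_pos.2 hl0) (Real.sqrt_pos.2 hy0), mul_assoc,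
        ← Real.sqrt_mul hM0.le]
      gcongr
  · push Not at hyL
    have : M * |l| ≤ |y| := le_trans (by gcongr) hyL.le
    refine (h1 hy this).trans ?_
    have e : C / √T * ((y / (M * T)) ^ 2)⁻¹ = C / y ^ 2 * (M ^ 2 * (T ^ 2 / √T)) := by
      field_simp
    rw [e]
    apply le_mul_of_one_le_right (by positivity)
    have h5 : 1 ≤ T ^ 2 / √T := by
      rw [one_le_div (by positivity), Real.sqrt_le_left (by positivity)]
      nlinarith [pow_le_pow_right₀ hT (show 1 ≤ 4 by norm_num)]
    nlinarith [one_le_pow₀ hM (n := 2)]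

theorem integrable_kernelProfile : Integrable kernelProfile := by
  have h1 : IntegrableOn kernelProfile (Set.Ioc 0 1) := by
    have := (intervalIntegral.intervalIntegrable_rpow' (a := 0) (b := 1)
      (r := -(1 / 2)) (by norm_num)).1
    refine this.congr_fun (fun u hu => ?_) measurableSet_Ioc
    simp only [kernelProfile]
    rw [abs_of_pos hu.1, if_pos hu.2, Real.rpow_neg hu.1.le, Real.sqrt_eq_rpow]
  have h2 : IntegrableOn kernelProfile (Set.Ioi 1) := by
    refine (integrableOn_Ioi_rpow_of_lt (show (-2 : ℝ) < -1 by norm_num) one_pos).congr_fun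
      (fun u hu => ?_) measurableSet_Ioi
    have hu0 : 0 < u := one_pos.trans hu
    simp only [kernelProfile]
    rw [abs_of_pos hu0, if_neg (not_le.2 hu), Real.rpow_neg hu0.le]
    norm_num
  have h3 : IntegrableOn kernelProfile (Set.Ioi 0) := by
    rw [← Set.Ioc_union_Ioi_eq_Ioi (zero_le_one' ℝ)]
    exact h1.union h2
  have h4 : IntegrableOn kernelProfile (Set.Iic 0) := by
    rw [← Measure.map_neg_eq_self (volume : Measure ℝ)]
    have m : MeasurableEmbedding fun x : ℝ => -x := (Homeomorph.neg ℝ).measurableEmbedding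
    rw [m.integrableOn_map_iff]
    have e : kernelProfile ∘ (fun x : ℝ => -x) = kernelProfile := by
      ext u; simp [kernelProfile]
    rw [e, Set.neg_preimage, Set.neg_Iic, neg_zero]
    exact Iff.mpr integrableOn_Ici_iff_integrableOn_Ioi h3
  rw [← integrableOn_univ, ← Set.Iic_union_Ioi (a := (0 : ℝ))]
  exact h4.union h3

/-- The adjoint of the linearized maximal operator with phase `p` and time function `t`. -/
def dualOp (p t : ℝ → ℝ) (h : ℝ → ℂ) (ξ : ℝ) : ℂ :=
  ∫ x, Complex.exp (Complex.I * ((x * ξ + t x * p ξ : ℝ) : ℂ)) * h x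

theorem measurable_dualOp {p t : ℝ → ℝ} {h : ℝ → ℂ} (hp : Measurable p) (ht : Measurable t)
    (hh : Measurable h) : Measurable (dualOp p t h) := by
  have : StronglyMeasurable fun w : ℝ × ℝ =>
      Complex.exp (Complex.I * ((w.2 * w.1 + t w.2 * p w.1 : ℝ) : ℂ)) * h w.2 := by
    apply Measurable.stronglyMeasurable
    fun_prop
  exact (this.integral_prod_right' (ν := volume)).measurable

theorem norm_exp_I_mul_ofReal (r : ℝ) : ‖Complex.exp (Complex.I * (r : ℂ))‖ = 1 := by
  rw [mul_comm]; exact Complex.norm_exp_ofReal_mul_I r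

theorem ennreal_mul_le_sq_add_sq (x y : ENNReal) : x * y ≤ x ^ 2 + y ^ 2 := by
  rcases le_total x y with h | h
  · calc x * y ≤ y * y := by gcongr
      _ = y ^ 2 := (sq y).symm
      _ ≤ _ := le_add_self
  · calc x * y ≤ x * x := by gcongr
      _ = x ^ 2 := (sq x).symm
      _ ≤ _ := le_self_add

/-- Schur test for the `T T*` form: a kernel bound uniform in time controls the dual operator. -/
theorem lintegral_dualOp_sq_le {p t φ : ℝ → ℝ} {h : ℝ → ℂ} {k : ℝ → ENNReal}
    (hp : Measurable p) (ht : Measurable t) (ht1 : ∀ x, |t x| ≤ 1) (hφ : Integrable φ)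
    (hφ0 : ∀ ξ, 0 ≤ φ ξ) (hhm : Measurable h) (hh : Integrable h) (hk : Measurable k)
    (hK : ∀ x τ : ℝ, |τ| ≤ 2 →
      ‖∫ ξ, Complex.exp (Complex.I * ((x * ξ + τ * p ξ : ℝ) : ℂ)) * φ ξ‖ₑ ≤ k x) :
    ∫⁻ ξ, ENNReal.ofReal (φ ξ) * ‖dualOp p t h ξ‖ₑ ^ 2 ≤
      2 * (∫⁻ x, k x) * ∫⁻ x, ‖h x‖ₑ ^ 2 := by
  set base : ℝ × (ℝ × ℝ) → ℂ := fun w =>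
    (φ w.1 : ℂ) * (h w.2.1 * (starRingEnd ℂ) (h w.2.2)) with hbase
  set U : ℝ × (ℝ × ℝ) → ℂ := fun w => Complex.exp (Complex.I *
    (((w.2.1 - w.2.2) * w.1 + (t w.2.1 - t w.2.2) * p w.1 : ℝ) : ℂ)) with hU
  have ibase : Integrable base (volume.prod (volume.prod volume)) := by
    have h2 : Integrable (fun x => (starRingEnd ℂ) (h x)) :=
      (integrable_norm_iff (by fun_prop)).1 (by simpa using hh.norm)
    exact (hφ.ofReal (𝕜 := ℂ)).mul_prod (hh.mul_prod h2)
  have mU : Measurable U := by fun_prop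
  set F : ℝ → ℝ × ℝ → ℂ := fun ξ z => base (ξ, z) * U (ξ, z) with hF
  have iF : Integrable (Function.uncurry F) (volume.prod (volume.prod volume)) := by
    refine ibase.mono (ibase.aestronglyMeasurable.mul mU.aestronglyMeasurable)
      (Filter.Eventually.of_forall fun w => ?_)
    change ‖base w * U w‖ ≤ _
    rw [norm_mul, hU, norm_exp_I_mul_ofReal, mul_one]
  have e1 : ∀ ξ, ∫ z, F ξ z = ((φ ξ * ‖dualOp p t h ξ‖ ^ 2 : ℝ) : ℂ) := by
    intro ξ
    have : ∀ z, F ξ z = (φ ξ : ℂ) *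
        ((Complex.exp (Complex.I * ((z.1 * ξ + t z.1 * p ξ : ℝ) : ℂ)) * h z.1) *
          (starRingEnd ℂ) (Complex.exp (Complex.I * ((z.2 * ξ + t z.2 * p ξ : ℝ) : ℂ)) * h z.2)) := by
      intro z
      simp only [hF, hbase, hU]
      rw [map_mul, ← Complex.exp_conj, map_mul, Complex.conj_I, Complex.conj_ofReal]
      rw [show Complex.I * (((z.1 - z.2) * ξ + (t z.1 - t z.2) * p ξ : ℝ) : ℂ) =
        Complex.I * ((z.1 * ξ + t z.1 * p ξ : ℝ) : ℂ) + -Complex.I * ((z.2 * ξ + t z.2 * p ξ : ℝ) : ℂ)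
        by push_cast; ring, Complex.exp_add]
      ring
    simp_rw [this]
    rw [integral_const_mul, Measure.volume_eq_prod, integral_prod_mul
      (f := fun x => Complex.exp (Complex.I * ((x * ξ + t x * p ξ : ℝ) : ℂ)) * h x)
      (g := fun x => (starRingEnd ℂ) (Complex.exp (Complex.I * ((x * ξ + t x * p ξ : ℝ) : ℂ)) * h x)),
      integral_conj]
    rw [← dualOp, Complex.mul_conj, Complex.normSq_eq_norm_sq]
    push_cast
    ring
  have i1 : Integrable fun ξ => φ ξ * ‖dualOp p t h ξ‖ ^ 2 := by
    have := iF.integral_prod_left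
    simp only [Function.uncurry] at this
    rw [← Measure.volume_eq_prod] at this
    simp_rw [e1] at this
    exact this.re
  have e2 : ∫⁻ ξ, ENNReal.ofReal (φ ξ) * ‖dualOp p t h ξ‖ₑ ^ 2 = ‖∫ ξ, ∫ z, F ξ z‖ₑ := by
    simp_rw [e1]
    rw [integral_complex_ofReal, ← ofReal_norm]
    have h0 : ∀ ξ, 0 ≤ φ ξ * ‖dualOp p t h ξ‖ ^ 2 := fun ξ => mul_nonneg (hφ0 ξ) (sq_nonneg _)
    rw [Complex.norm_real, Real.norm_of_nonneg (integral_nonneg h0),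
      ofReal_integral_eq_lintegral_ofReal i1 (Filter.Eventually.of_forall h0)]
    refine lintegral_congr fun ξ => ?_
    rw [ENNReal.ofReal_mul (hφ0 ξ), ENNReal.ofReal_pow (norm_nonneg _), ofReal_norm]
  have mk : Measurable fun z : ℝ × ℝ => k (z.1 - z.2) := by fun_prop
  rw [e2, Measure.volume_eq_prod, integral_integral_swap iF]
  calc ‖∫ z, ∫ ξ, F ξ z ∂volume ∂(volume.prod volume)‖ₑ
      ≤ ∫⁻ z, ‖∫ ξ, F ξ z‖ₑ ∂(volume.prod volume) := enorm_integral_le_lintegral_enorm _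
    _ ≤ ∫⁻ z : ℝ × ℝ, (‖h z.1‖ₑ ^ 2 * k (z.1 - z.2) + ‖h z.2‖ₑ ^ 2 * k (z.1 - z.2))
          ∂(volume.prod volume) := by
        refine lintegral_mono fun z => ?_
        have : ∀ ξ, F ξ z = (h z.1 * (starRingEnd ℂ) (h z.2)) * (Complex.exp (Complex.I *
            (((z.1 - z.2) * ξ + (t z.1 - t z.2) * p ξ : ℝ) : ℂ)) * φ ξ) := fun ξ => by
          simp only [hF, hbase, hU]; ring
        simp_rw [this]
        rw [integral_const_mul, enorm_mul, enorm_mul, RCLike.enorm_conj, ← add_mul]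
        gcongr
        · exact ennreal_mul_le_sq_add_sq _ _
        · apply hK
          have h1 := abs_le.1 (ht1 z.1)
          have h2 := abs_le.1 (ht1 z.2)
          rw [abs_le]; constructor <;> linarith [h1.1, h1.2, h2.1, h2.2]
    _ = (∫⁻ x, k x) * (∫⁻ x, ‖h x‖ₑ ^ 2) + (∫⁻ x, k x) * (∫⁻ x, ‖h x‖ₑ ^ 2) := by
        rw [lintegral_add_left (by fun_prop)]
        congr 1
        · rw [lintegral_prod _ (by fun_prop)]
          have : ∀ x : ℝ, ∫⁻ y, ‖h x‖ₑ ^ 2 * k (x - y) = ‖h x‖ₑ ^ 2 * ∫⁻ y, k y := fun x => by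
            rw [lintegral_const_mul _ (by fun_prop), lintegral_sub_left_eq_self]
          simp_rw [this]
          rw [lintegral_mul_const _ (by fun_prop), mul_comm]
        · rw [lintegral_prod_symm _ (by fun_prop)]
          have : ∀ y : ℝ, ∫⁻ x, ‖h y‖ₑ ^ 2 * k (x - y) = ‖h y‖ₑ ^ 2 * ∫⁻ x, k x := fun y => by
            rw [lintegral_const_mul _ (by fun_prop), lintegral_sub_right_eq_self]
          simp_rw [this]
          rw [lintegral_mul_const _ (by fun_prop), mul_comm]
    _ = _ := by ring

/-- The dilated profile, set to `⊤` at the origin. -/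
def dilatedProfile (A b x : ℝ) : ENNReal :=
  if x = 0 then ⊤ else ENNReal.ofReal (A * kernelProfile (x / b))

theorem measurable_dilatedProfile (A b : ℝ) : Measurable (dilatedProfile A b) := by
  unfold dilatedProfile
  have := measurable_kernelProfile
  exact Measurable.ite (measurableSet_eq_fun measurable_id measurable_const) (by fun_prop)
    (by fun_prop)

theorem lintegral_dilatedProfile {A : ℝ} (hA : 0 ≤ A) (b : ℝ) :
    ∫⁻ x, dilatedProfile A b x = ENNReal.ofReal (A * (|b| * ∫ u, kernelProfile u)) := by
  have h1 : dilatedProfile A b =ᵐ[volume] fun x => ENNReal.ofReal (A * kernelProfile (x / b)) := by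
    have : ∀ᵐ x : ℝ, x ≠ 0 := by simp [ae_iff]
    filter_upwards [this] with x hx
    simp [dilatedProfile, hx]
  rw [lintegral_congr_ae h1]
  by_cases hb : b = 0
  · subst hb
    simp [kernelProfile]
  rw [← ofReal_integral_eq_lintegral_ofReal ((integrable_kernelProfile.comp_div hb).const_mul A)
    (Filter.Eventually.of_forall fun x => mul_nonneg hA (kernelProfile_nonneg _)),
    integral_const_mul, Measure.integral_comp_div, smul_eq_mul]

theorem integral_kernelProfile_nonneg : 0 ≤ ∫ u, kernelProfile u :=
  integral_nonneg kernelProfile_nonneg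

theorem continuous_annulusBump : Continuous annulusBump := annulusBump.continuous

theorem integrable_annulusBump : Integrable (annulusBump : ℝ → ℝ) :=
  continuous_annulusBump.integrable_of_hasCompactSupport annulusBump.hasCompactSupport

theorem exists_lintegral_annulus_dualOp_le {a : ℝ} (ha : 0 < a) (ha1 : a ≠ 1) :
    ∃ C > 0, ∀ (c : ℝ) (t : ℝ → ℝ) (h : ℝ → ℂ), c ≠ 0 → |c| ≤ 1 → Measurable t →
      (∀ x, |t x| ≤ 1) → Measurable h → Integrable h →
      ∫⁻ ξ, ENNReal.ofReal (annulusBump (c * ξ)) * ‖dualOp (fun ξ => |ξ| ^ a) t h ξ‖ₑ ^ 2 ≤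
        ENNReal.ofReal (C * √(|c| ^ (-a))) * ∫⁻ x, ‖h x‖ₑ ^ 2 := by
  obtain ⟨C, hC, M, hM, H⟩ := exists_unitKernel_le_profile ha ha1
  have hM0 : 0 < M := by linarith
  have hI := integral_kernelProfile_nonneg
  refine ⟨2 * (C * M * √2 * (∫ u, kernelProfile u)) + 1, by positivity,
    fun c t h hc hc1 ht ht1 hhm hh => ?_⟩
  have hc0 : 0 < |c| := abs_pos.2 hc
  set R := |c| ^ (-a) with hR
  have hR1 : 1 ≤ R := Real.one_le_rpow_of_pos_of_le_one_of_nonpos hc0 hc1 (by linarith)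
  have hR0 : 0 < R := by linarith
  have hkey := lintegral_dualOp_sq_le (p := fun ξ => |ξ| ^ a) (t := t)
    (φ := fun ξ => annulusBump (c * ξ)) (h := h)
    (k := dilatedProfile (|c|⁻¹ * (C / √(2 * R))) (c * (M * (2 * R))))
    (by fun_prop) ht ht1 (integrable_annulusBump.comp_mul_left' hc) (fun ξ => annulusBump.nonneg)
    hhm hh (measurable_dilatedProfile _ _) ?_
  · refine hkey.trans ?_
    rw [lintegral_dilatedProfile (by positivity)]
    gcongr
    rw [← ENNReal.ofReal_ofNat, ← ENNReal.ofReal_mul (by norm_num)]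
    apply ENNReal.ofReal_le_ofReal
    have e : |c|⁻¹ * (C / √(2 * R)) * (|c * (M * (2 * R))| * ∫ u, kernelProfile u) =
        C * M * √2 * (∫ u, kernelProfile u) * √R := by
      rw [abs_mul, abs_of_pos (by positivity : 0 < M * (2 * R)), Real.sqrt_mul (by norm_num)]
      have h2 : √2 * √2 = 2 := Real.mul_self_sqrt (by norm_num)
      have h3 : √R * √R = R := Real.mul_self_sqrt hR0.le
      have : 0 < √R := Real.sqrt_pos.2 hR0
      field_simp
      rw [pow_two, pow_two, h2, h3]
    rw [e]
    have : 0 ≤ √R := Real.sqrt_nonneg _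
    linarith
  · intro x τ hτ
    unfold dilatedProfile
    split_ifs with hx
    · exact le_top
    have e : ∫ ξ, Complex.exp (Complex.I * ((x * ξ + τ * |ξ| ^ a : ℝ) : ℂ)) *
        ((annulusBump (c * ξ) : ℝ) : ℂ) = |c⁻¹| • unitKernel a (x / c) (τ * R) := by
      rw [unitKernel, ← Measure.integral_comp_mul_left]
      congr 1
      ext ξ
      have h1 : x / c * (c * ξ) = x * ξ := by field_simp
      have h2 : τ * R * |c * ξ| ^ a = τ * |ξ| ^ a := by
        rw [abs_mul, Real.mul_rpow hc0.le (abs_nonneg _), hR, Real.rpow_neg hc0.le]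
        have := Real.rpow_pos_of_pos hc0 a
        field_simp
      rw [h1, h2]
    rw [e, ← ofReal_norm, norm_smul, Real.norm_of_nonneg (abs_nonneg _), abs_inv]
    apply ENNReal.ofReal_le_ofReal
    rw [mul_assoc]
    gcongr
    have := H (2 * R) (by linarith) (x / c) (τ * R) (div_ne_zero hx hc)
      (by rw [abs_mul, abs_of_pos hR0]; gcongr)
    rwa [div_div] at this

theorem exists_lintegral_Icc_fourier_le : ∃ C > 0, ∀ (t : ℝ → ℝ) (h : ℝ → ℂ), Measurable h →
    Integrable h → ∫⁻ ξ in Set.Icc (-1) 1, ‖dualOp 0 t h ξ‖ₑ ^ 2 ≤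
      ENNReal.ofReal C * ∫⁻ x, ‖h x‖ₑ ^ 2 := by
  obtain ⟨C, hC, M, hM, H⟩ := exists_unitKernel_le_profile (a := 2) two_pos (by norm_num)
  have hM0 : 0 < M := by linarith
  have hI := integral_kernelProfile_nonneg
  refine ⟨2 * (2 * C * (M / 2 * ∫ u, kernelProfile u)) + 1, by positivity, fun t h hhm hh => ?_⟩
  have et : dualOp 0 t h = dualOp 0 0 h := by
    ext ξ; simp [dualOp]
  have hφ : Integrable fun ξ : ℝ => annulusBump (1 / 2 * ξ + 3 / 2) := by
    have := (integrable_annulusBump.comp_add_right (3 / 2)).comp_mul_left' (R := 1 / 2)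
      (by norm_num)
    exact this
  have hkey := lintegral_dualOp_sq_le (p := 0) (t := 0)
    (φ := fun ξ => annulusBump (1 / 2 * ξ + 3 / 2)) (h := h)
    (k := dilatedProfile (2 * C) (M / 2))
    measurable_zero measurable_zero (by simp) hφ (fun ξ => annulusBump.nonneg)
    hhm hh (measurable_dilatedProfile _ _) ?_
  · calc ∫⁻ ξ in Set.Icc (-1) 1, ‖dualOp 0 t h ξ‖ₑ ^ 2
        ≤ ∫⁻ ξ in Set.Icc (-1) 1, ENNReal.ofReal (annulusBump (1 / 2 * ξ + 3 / 2)) *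
          ‖dualOp 0 0 h ξ‖ₑ ^ 2 := by
          refine setLIntegral_mono' measurableSet_Icc fun ξ hξ => ?_
          rw [annulusBump_eq_one (by linarith [hξ.1]) (by linarith [hξ.2]), ENNReal.ofReal_one,
            one_mul, et]
      _ ≤ _ := setLIntegral_le_lintegral _ _
      _ ≤ _ := hkey
      _ ≤ _ := by
        rw [lintegral_dilatedProfile (by positivity), abs_of_pos (by positivity : 0 < M / 2)]
        gcongr
        rw [← ENNReal.ofReal_ofNat, ← ENNReal.ofReal_mul (by norm_num)]
        apply ENNReal.ofReal_le_ofReal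
        linarith
  · intro x τ hτ
    unfold dilatedProfile
    split_ifs with hx
    · exact le_top
    have e : ∫ ξ, Complex.exp (Complex.I * ((x * ξ + τ * (0 : ℝ → ℝ) ξ : ℝ) : ℂ)) *
        ((annulusBump (1 / 2 * ξ + 3 / 2) : ℝ) : ℂ) =
        Complex.exp (Complex.I * ((-(3 * x) : ℝ) : ℂ)) * ((2 : ℝ) • unitKernel 2 (2 * x) 0) := by
      rw [unitKernel, ← integral_add_right_eq_self (fun η : ℝ => Complex.exp (Complex.I *
        ((2 * x * η + 0 * |η| ^ (2 : ℝ) : ℝ) : ℂ)) * ((annulusBump η : ℝ) : ℂ)) (3 / 2 : ℝ)]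
      have := Measure.integral_comp_mul_left (fun ξ : ℝ => Complex.exp (Complex.I *
        ((2 * x * (ξ + 3 / 2) + 0 * |ξ + 3 / 2| ^ (2 : ℝ) : ℝ) : ℂ)) *
        ((annulusBump (ξ + 3 / 2) : ℝ) : ℂ)) (1 / 2)
      rw [show |(1 / 2 : ℝ)⁻¹| = 2 by norm_num] at this
      rw [← this, ← integral_const_mul]
      congr 1
      ext ξ
      rw [← mul_assoc, ← Complex.exp_add]
      congr 2
      simp only [Pi.zero_apply]
      push_cast
      ring
    rw [e, ← ofReal_norm, norm_mul, norm_exp_I_mul_ofReal, one_mul, norm_smul]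
    apply ENNReal.ofReal_le_ofReal
    have := H 1 le_rfl (2 * x) 0 (mul_ne_zero two_ne_zero hx) (by simp)
    rw [Real.sqrt_one, div_one, mul_one, show 2 * x / M = x / (M / 2) by field_simp] at this
    rw [Real.norm_of_nonneg (by norm_num), mul_assoc]
    gcongr
theorem ennreal_tsum_mul_sq_le (w x : ℕ → ENNReal) :
    (∑' n, w n * x n) ^ 2 ≤ 2 * (∑' n, w n) * ∑' n, w n * x n ^ 2 := by
  calc (∑' n, w n * x n) ^ 2 = ∑' n, ∑' m, (w n * x n) * (w m * x m) := by
        rw [sq, ← ENNReal.tsum_mul_right]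
        simp_rw [ENNReal.tsum_mul_left]
    _ ≤ ∑' n, ∑' m, ((w n * x n ^ 2) * w m + w n * (w m * x m ^ 2)) := by
        refine ENNReal.tsum_le_tsum fun n => ENNReal.tsum_le_tsum fun m => ?_
        calc (w n * x n) * (w m * x m) = w n * w m * (x n * x m) := by ring
          _ ≤ w n * w m * (x n ^ 2 + x m ^ 2) := by gcongr; exact ennreal_mul_le_sq_add_sq _ _
          _ = _ := by ring
    _ = _ := by
        simp_rw [ENNReal.tsum_add, ENNReal.tsum_mul_left, ENNReal.tsum_mul_right]
        ring

theorem hasSum_dualOp {p t : ℝ → ℝ} {h : ℝ → ℂ} {ξ : ℝ} (hp : |p ξ| ≤ 1) (ht : Measurable t)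
    (ht1 : ∀ x, |t x| ≤ 1) (hhm : Measurable h) (hh : Integrable h) :
    HasSum (fun n : ℕ => (Complex.I * (p ξ : ℂ)) ^ n / (n.factorial : ℂ) *
      dualOp 0 t (fun x => ((t x : ℂ)) ^ n * h x) ξ) (dualOp p t h ξ) := by
  set F : ℕ → ℝ → ℂ := fun n x => (Complex.I * (p ξ : ℂ)) ^ n / (n.factorial : ℂ) *
    (Complex.exp (Complex.I * ((x * ξ + t x * (0 : ℝ → ℝ) ξ : ℝ) : ℂ)) * (((t x : ℂ)) ^ n * h x))
    with hF
  have hb : ∀ n x, ‖F n x‖ ≤ 1 / (n.factorial : ℝ) * ‖h x‖ := by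
    intro n x
    simp only [hF, norm_mul, norm_div, norm_pow, Complex.norm_I, one_mul, Complex.norm_real,
      Complex.norm_natCast, norm_exp_I_mul_ofReal, Real.norm_eq_abs]
    have h1 : |p ξ| ^ n ≤ 1 := pow_le_one₀ (abs_nonneg _) hp
    have h2 : |t x| ^ n ≤ 1 := pow_le_one₀ (abs_nonneg _) (ht1 x)
    gcongr
    exact mul_le_of_le_one_left (norm_nonneg _) h2
  have hi : ∀ n, Integrable (F n) := fun n =>
    (hh.norm.const_mul (1 / (n.factorial : ℝ))).mono'
      (by apply Measurable.aestronglyMeasurable; fun_prop) (Filter.Eventually.of_forall (hb n))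
  have hs : Summable fun n => ∫ x, ‖F n x‖ := by
    refine Summable.of_nonneg_of_le (fun n => integral_nonneg fun x => norm_nonneg _)
      (fun n => ?_) ((Real.summable_pow_div_factorial 1).mul_right (∫ x, ‖h x‖))
    rw [one_pow, ← integral_const_mul]
    exact integral_mono (hi n).norm (hh.norm.const_mul _) (hb n)
  have := hasSum_integral_of_summable_integral_norm hi hs
  have e1 : ∀ n, ∫ x, F n x = (Complex.I * (p ξ : ℂ)) ^ n / (n.factorial : ℂ) *
      dualOp 0 t (fun x => ((t x : ℂ)) ^ n * h x) ξ := fun n => by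
    rw [hF, dualOp, ← integral_const_mul]
  have e2 : ∫ x, ∑' n, F n x = dualOp p t h ξ := by
    rw [dualOp]
    congr 1
    ext x
    have hx : HasSum (fun n : ℕ => (Complex.I * ((t x * p ξ : ℝ) : ℂ)) ^ n / (n.factorial : ℂ))
        (Complex.exp (Complex.I * ((t x * p ξ : ℝ) : ℂ))) := by
      rw [Complex.exp_eq_exp_ℂ]
      exact NormedSpace.expSeries_div_hasSum_exp _
    have := hx.mul_right (Complex.exp (Complex.I * ((x * ξ : ℝ) : ℂ)) * h x)
    rw [← mul_assoc, ← Complex.exp_add] at this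
    convert this.tsum_eq using 1
    · refine tsum_congr fun n => ?_
      simp only [hF, Pi.zero_apply, mul_zero, add_zero]
      push_cast
      ring
    · push_cast
      ring_nf
  simp_rw [e1] at this
  rwa [e2] at this

theorem exists_lintegral_Icc_dualOp_le : ∃ C > 0, ∀ (p t : ℝ → ℝ) (h : ℝ → ℂ),
    (∀ ξ ∈ Set.Icc (-1 : ℝ) 1, |p ξ| ≤ 1) → Measurable t → (∀ x, |t x| ≤ 1) →
    Measurable h → Integrable h → ∫⁻ ξ in Set.Icc (-1) 1, ‖dualOp p t h ξ‖ₑ ^ 2 ≤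
      ENNReal.ofReal C * ∫⁻ x, ‖h x‖ₑ ^ 2 := by
  obtain ⟨C, hC, H⟩ := exists_lintegral_Icc_fourier_le
  set w : ℕ → ENNReal := fun n => ENNReal.ofReal (1 ^ n / (n.factorial : ℝ)) with hw
  have hwsum : ∑' n, w n = ENNReal.ofReal (Real.exp 1) := by
    rw [← ENNReal.ofReal_tsum_of_nonneg (fun n => by positivity) (Real.summable_pow_div_factorial 1),
      Real.exp_eq_exp_ℝ, NormedSpace.exp_eq_tsum_div]
  refine ⟨2 * Real.exp 1 * (Real.exp 1 * C), by positivity, fun p t h hp ht ht1 hhm hh => ?_⟩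
  set G : ℕ → ℝ → ℂ := fun n => dualOp 0 t (fun x => ((t x : ℂ)) ^ n * h x) with hG
  have hGm : ∀ n, Measurable (G n) := fun n => measurable_dualOp measurable_zero ht (by fun_prop)
  have hle : ∀ n x, ‖((t x : ℂ)) ^ n * h x‖ ≤ ‖h x‖ := by
    intro n x
    rw [norm_mul, norm_pow, Complex.norm_real]
    exact mul_le_of_le_one_left (norm_nonneg _) (pow_le_one₀ (norm_nonneg _) (ht1 x))
  calc ∫⁻ ξ in Set.Icc (-1) 1, ‖dualOp p t h ξ‖ₑ ^ 2
      ≤ ∫⁻ ξ in Set.Icc (-1) 1, 2 * (∑' n, w n) * ∑' n, w n * ‖G n ξ‖ₑ ^ 2 := by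
        refine setLIntegral_mono' measurableSet_Icc fun ξ hξ => ?_
        refine le_trans ?_ (ennreal_tsum_mul_sq_le _ _)
        gcongr
        rw [← (hasSum_dualOp (hp ξ hξ) ht ht1 hhm hh).tsum_eq]
        refine enorm_tsum_le_tsum_enorm.trans (ENNReal.tsum_le_tsum fun n => ?_)
        rw [enorm_mul]
        gcongr
        rw [hw, ← ofReal_norm]
        apply ENNReal.ofReal_le_ofReal
        simp only [norm_div, norm_pow, norm_mul, Complex.norm_I, one_mul, Complex.norm_real,
          Complex.norm_natCast, Real.norm_eq_abs]
        gcongr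
        exact hp ξ hξ
    _ = 2 * (∑' n, w n) * ∑' n, w n * ∫⁻ ξ in Set.Icc (-1) 1, ‖G n ξ‖ₑ ^ 2 := by
        rw [lintegral_const_mul _ (by fun_prop), lintegral_tsum (fun n => by fun_prop)]
        congr 1
        refine tsum_congr fun n => ?_
        rw [lintegral_const_mul _ (by fun_prop)]
    _ ≤ 2 * (∑' n, w n) * ∑' n, w n * (ENNReal.ofReal C * ∫⁻ x, ‖h x‖ₑ ^ 2) := by
        gcongr with n
        refine (H t _ (by fun_prop) (hh.mono (by
          apply Measurable.aestronglyMeasurable; fun_prop)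
          (Filter.Eventually.of_forall (hle n)))).trans ?_
        gcongr with x
        exact enorm_le_iff_norm_le.2 (hle n x)
    _ = _ := by
        rw [ENNReal.tsum_mul_right, hwsum, ENNReal.ofReal_mul (by positivity),
          ENNReal.ofReal_mul (by positivity), ENNReal.ofReal_mul (by positivity),
          ENNReal.ofReal_ofNat]
        ring

theorem ofReal_bessel_weight_le {s : ℝ} (hs : 0 < s) (ξ : ℝ) :
    ENNReal.ofReal ((1 + |ξ| ^ 2) ^ (-s)) ≤ (Set.Icc (-1 : ℝ) 1).indicator 1 ξ +
      ∑' k : ℕ, ENNReal.ofReal (((4 : ℝ) ^ (-s)) ^ k) *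
        (ENNReal.ofReal (annulusBump ((1 / 2) ^ k * ξ)) +
          ENNReal.ofReal (annulusBump (-(1 / 2) ^ k * ξ))) := by
  have h0 : 0 ≤ |ξ| ^ 2 := by positivity
  by_cases hξ : |ξ| ≤ 1
  · rw [Set.indicator_of_mem (Set.mem_Icc.2 (abs_le.1 hξ)), Pi.one_apply]
    refine le_trans ?_ le_self_add
    rw [ENNReal.ofReal_le_one]
    exact Real.rpow_le_one_of_one_le_of_nonpos (by linarith) (by linarith)
  push Not at hξ
  obtain ⟨k, hk1, hk2⟩ := exists_nat_pow_near hξ.le (one_lt_two : (1 : ℝ) < 2)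
  refine le_trans ?_ le_add_self
  refine le_trans ?_ (ENNReal.le_tsum k)
  have hw : (1 + |ξ| ^ 2) ^ (-s) ≤ ((4 : ℝ) ^ (-s)) ^ k := by
    rw [← Real.rpow_natCast (4 ^ (-s)) k, ← Real.rpow_mul (by norm_num), mul_comm (-s),
      Real.rpow_mul (by norm_num)]
    refine Real.rpow_le_rpow_of_nonpos (by positivity) ?_ (by linarith)
    rw [Real.rpow_natCast]
    calc (4 : ℝ) ^ k = ((2 : ℝ) ^ k) ^ 2 := by rw [← pow_mul, mul_comm, pow_mul]; norm_num
      _ ≤ |ξ| ^ 2 := by gcongr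
      _ ≤ _ := by linarith
  have h2k : (0 : ℝ) < 2 ^ k := by positivity
  have hu1 : 1 ≤ (1 / 2 : ℝ) ^ k * |ξ| := by
    rw [one_div, inv_pow, inv_mul_eq_div, le_div_iff₀ h2k]; linarith
  have hu2 : (1 / 2 : ℝ) ^ k * |ξ| ≤ 2 := by
    rw [one_div, inv_pow, inv_mul_eq_div, div_le_iff₀ h2k]
    rw [pow_succ] at hk2; linarith
  have hone : 1 ≤ ENNReal.ofReal (annulusBump ((1 / 2) ^ k * ξ)) +
      ENNReal.ofReal (annulusBump (-(1 / 2) ^ k * ξ)) := by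
    rcases abs_cases ξ with ⟨h, -⟩ | ⟨h, -⟩
    · rw [h] at hu1 hu2
      rw [annulusBump_eq_one hu1 hu2, ENNReal.ofReal_one]
      exact le_self_add
    · rw [h] at hu1 hu2
      rw [annulusBump_eq_one (η := -(1 / 2) ^ k * ξ) (by linarith) (by linarith),
        ENNReal.ofReal_one]
      exact le_add_self
  calc ENNReal.ofReal ((1 + |ξ| ^ 2) ^ (-s)) ≤ ENNReal.ofReal (((4 : ℝ) ^ (-s)) ^ k) * 1 := by
        rw [mul_one]; exact ENNReal.ofReal_le_ofReal hw
    _ ≤ _ := by gcongr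

/-- The weighted estimate dual to the maximal inequality. -/
theorem exists_lintegral_weight_dualOp_le {a s : ℝ} (ha : 0 < a) (ha1 : a ≠ 1) (hs : a / 4 < s) :
    ∃ C > 0, ∀ (t : ℝ → ℝ) (h : ℝ → ℂ), Measurable t → (∀ x, |t x| ≤ 1) →
    Measurable h → Integrable h →
    ∫⁻ ξ, ENNReal.ofReal ((1 + |ξ| ^ 2) ^ (-s)) * ‖dualOp (fun ξ => |ξ| ^ a) t h ξ‖ₑ ^ 2 ≤
      ENNReal.ofReal C * ∫⁻ x, ‖h x‖ₑ ^ 2 := by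
  obtain ⟨C₁, hC₁, H₁⟩ := exists_lintegral_Icc_dualOp_le
  obtain ⟨C₂, hC₂, H₂⟩ := exists_lintegral_annulus_dualOp_le ha ha1
  have hs0 : 0 < s := by linarith
  set r : ℝ := (2 : ℝ) ^ (a / 2 - 2 * s) with hr
  have hr0 : 0 < r := by positivity
  have hr1 : r < 1 := Real.rpow_lt_one_of_one_lt_of_neg one_lt_two (by linarith)
  have hsum : ∑' k : ℕ, ENNReal.ofReal (r ^ k) = ENNReal.ofReal ((1 - r)⁻¹) := by
    rw [← ENNReal.ofReal_tsum_of_nonneg (fun n => by positivity)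
      (summable_geometric_of_lt_one hr0.le hr1), tsum_geometric_of_lt_one hr0.le hr1]
  have hr1' : 0 < (1 - r)⁻¹ := inv_pos.2 (by linarith)
  refine ⟨C₁ + 2 * C₂ * (1 - r)⁻¹, by positivity, fun t h ht ht1 hhm hh => ?_⟩
  have hpm : Measurable fun ξ : ℝ => |ξ| ^ a := by fun_prop
  have hHm := measurable_dualOp hpm ht hhm
  set H := dualOp (fun ξ => |ξ| ^ a) t h with hH
  have hφm : Measurable fun x : ℝ => annulusBump x := continuous_annulusBump.measurable
  have hc : ∀ (k : ℕ) (c : ℝ), |c| = (1 / 2) ^ k →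
      ENNReal.ofReal (((4 : ℝ) ^ (-s)) ^ k) *
        ∫⁻ ξ, ENNReal.ofReal (annulusBump (c * ξ)) * ‖H ξ‖ₑ ^ 2 ≤
      ENNReal.ofReal (r ^ k) * (ENNReal.ofReal C₂ * ∫⁻ x, ‖h x‖ₑ ^ 2) := by
    intro k c hck
    have hc0 : c ≠ 0 := by
      rw [← abs_pos, hck]; positivity
    have hc1 : |c| ≤ 1 := by
      rw [hck]; exact pow_le_one₀ (by norm_num) (by norm_num)
    refine (mul_le_mul_right (H₂ c t h hc0 hc1 ht ht1 hhm hh) _).trans (le_of_eq ?_)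
    rw [← mul_assoc, ← mul_assoc, ← ENNReal.ofReal_mul (by positivity),
      ← ENNReal.ofReal_mul (by positivity)]
    congr 2
    have e1 : ((4 : ℝ) ^ (-s)) ^ k = (2 : ℝ) ^ (-(2 * s) * k) := by
      rw [← Real.rpow_natCast, show (4 : ℝ) = 2 ^ (2 : ℝ) by norm_num,
        ← Real.rpow_mul (by norm_num), ← Real.rpow_mul (by norm_num)]
      congr 1; ring
    have e2 : √(|c| ^ (-a)) = (2 : ℝ) ^ (a / 2 * k) := by
      rw [hck, one_div, inv_pow, Real.inv_rpow (by positivity), Real.rpow_neg (by positivity),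
        inv_inv, ← Real.rpow_natCast, Real.sqrt_eq_rpow, ← Real.rpow_mul (by norm_num),
        ← Real.rpow_mul (by norm_num)]
      congr 1; ring
    rw [e1, e2, hr, ← Real.rpow_natCast, ← Real.rpow_mul (by norm_num), mul_left_comm,
      ← Real.rpow_add (by norm_num), mul_comm]
    congr 2; ring
  calc ∫⁻ ξ, ENNReal.ofReal ((1 + |ξ| ^ 2) ^ (-s)) * ‖H ξ‖ₑ ^ 2
      ≤ ∫⁻ ξ, ((Set.Icc (-1 : ℝ) 1).indicator (fun ξ => ‖H ξ‖ₑ ^ 2) ξ +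
          ∑' k : ℕ, (ENNReal.ofReal (((4 : ℝ) ^ (-s)) ^ k) *
            (ENNReal.ofReal (annulusBump ((1 / 2) ^ k * ξ)) * ‖H ξ‖ₑ ^ 2) +
            ENNReal.ofReal (((4 : ℝ) ^ (-s)) ^ k) *
            (ENNReal.ofReal (annulusBump (-(1 / 2) ^ k * ξ)) * ‖H ξ‖ₑ ^ 2))) := by
        refine lintegral_mono fun ξ => ?_
        refine (mul_le_mul_left (ofReal_bessel_weight_le hs0 ξ) _).trans (le_of_eq ?_)
        rw [add_mul, ← ENNReal.tsum_mul_right]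
        congr 1
        · by_cases hξ : ξ ∈ Set.Icc (-1 : ℝ) 1 <;> simp [Set.indicator, hξ]
        · refine tsum_congr fun k => ?_
          ring
    _ = (∫⁻ ξ in Set.Icc (-1) 1, ‖H ξ‖ₑ ^ 2) +
          ∑' k : ℕ, ((ENNReal.ofReal (((4 : ℝ) ^ (-s)) ^ k) *
            ∫⁻ ξ, ENNReal.ofReal (annulusBump ((1 / 2) ^ k * ξ)) * ‖H ξ‖ₑ ^ 2) +
            ENNReal.ofReal (((4 : ℝ) ^ (-s)) ^ k) *
            ∫⁻ ξ, ENNReal.ofReal (annulusBump (-(1 / 2) ^ k * ξ)) * ‖H ξ‖ₑ ^ 2) := by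
        rw [lintegral_add_left ((by fun_prop : Measurable fun ξ => ‖H ξ‖ₑ ^ 2).indicator
          measurableSet_Icc), lintegral_indicator measurableSet_Icc,
          lintegral_tsum (fun k => by fun_prop)]
        congr 1
        refine tsum_congr fun k => ?_
        rw [lintegral_add_left (by fun_prop), lintegral_const_mul _ (by fun_prop),
          lintegral_const_mul _ (by fun_prop)]
    _ ≤ (ENNReal.ofReal C₁ * ∫⁻ x, ‖h x‖ₑ ^ 2) +
          ∑' k : ℕ, (ENNReal.ofReal (r ^ k) * (ENNReal.ofReal C₂ * ∫⁻ x, ‖h x‖ₑ ^ 2) +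
            ENNReal.ofReal (r ^ k) * (ENNReal.ofReal C₂ * ∫⁻ x, ‖h x‖ₑ ^ 2)) := by
        refine add_le_add (H₁ _ t h (fun ξ hξ => ?_) ht ht1 hhm hh)
          (ENNReal.tsum_le_tsum fun k => add_le_add (hc k _ ?_) (hc k _ ?_))
        · rw [abs_of_nonneg (by positivity)]
          exact Real.rpow_le_one (abs_nonneg _) (abs_le.2 hξ) ha.le
        · exact abs_of_pos (by positivity)
        · rw [abs_neg]; exact abs_of_pos (by positivity)
    _ = _ := by
        rw [ENNReal.tsum_add, ENNReal.tsum_mul_right, hsum, ENNReal.ofReal_add (by positivity)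
          (by positivity), ENNReal.ofReal_mul (by positivity), ENNReal.ofReal_mul (by positivity),
          ENNReal.ofReal_ofNat]
        ring

/-- The oscillatory extension operator with phase `x * ξ + t * p ξ`. -/
def extOp (p : ℝ → ℝ) (g : ℝ → ℂ) (x t : ℝ) : ℂ :=
  ∫ ξ, Complex.exp (Complex.I * ((x * ξ + t * p ξ : ℝ) : ℂ)) * g ξ

theorem norm_extOp_le (p : ℝ → ℝ) (g : ℝ → ℂ) (x t : ℝ) : ‖extOp p g x t‖ ≤ ∫ ξ, ‖g ξ‖ := by
  refine (norm_integral_le_integral_norm _).trans (le_of_eq ?_)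
  simp_rw [norm_mul, norm_exp_I_mul_ofReal, one_mul]

theorem continuous_extOp {p : ℝ → ℝ} {g : ℝ → ℂ} (hp : Measurable p) (hgm : Measurable g)
    (hg : Integrable g) : Continuous fun w : ℝ × ℝ => extOp p g w.1 w.2 := by
  unfold extOp
  refine MeasureTheory.continuous_of_dominated (bound := fun ξ => ‖g ξ‖) (fun w => ?_)
    (fun w => ?_) hg.norm ?_
  · apply Measurable.aestronglyMeasurable; fun_prop
  · refine Filter.Eventually.of_forall fun ξ => ?_
    rw [norm_mul, norm_exp_I_mul_ofReal, one_mul]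
  · refine Filter.Eventually.of_forall fun ξ => ?_
    fun_prop

theorem integral_mul_extOp {p t : ℝ → ℝ} {g h : ℝ → ℂ} (hp : Measurable p) (ht : Measurable t)
    (hgm : Measurable g) (hg : Integrable g) (hhm : Measurable h) (hh : Integrable h) :
    ∫ x, h x * extOp p g x (t x) = ∫ ξ, g ξ * dualOp p t h ξ := by
  have hi : Integrable (Function.uncurry fun x ξ : ℝ => h x *
      (Complex.exp (Complex.I * ((x * ξ + t x * p ξ : ℝ) : ℂ)) * g ξ)) (volume.prod volume) := by
    refine (hh.mul_prod hg).mono (by apply Measurable.aestronglyMeasurable; fun_prop) ?_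
    refine Filter.Eventually.of_forall fun w => ?_
    simp only [Function.uncurry, norm_mul, norm_exp_I_mul_ofReal, one_mul, le_refl]
  have := MeasureTheory.integral_integral_swap hi
  simp only [integral_const_mul] at this
  unfold extOp
  rw [this]
  congr 1
  ext ξ
  rw [dualOp, ← integral_const_mul]
  congr 1
  ext x
  ring

theorem two_mul_enorm_mul_le {v : ℝ} (hv : 0 < v) (z y : ℂ) :
    2 * (‖z‖ₑ * ‖y‖ₑ) ≤ ENNReal.ofReal v * ‖z‖ₑ ^ 2 + ENNReal.ofReal v⁻¹ * ‖y‖ₑ ^ 2 := by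
  rw [← ofReal_norm z, ← ofReal_norm y, ← ENNReal.ofReal_ofNat,
    ← ENNReal.ofReal_mul (norm_nonneg _), ← ENNReal.ofReal_pow (norm_nonneg _),
    ← ENNReal.ofReal_pow (norm_nonneg _), ← ENNReal.ofReal_mul (by norm_num),
    ← ENNReal.ofReal_mul hv.le, ← ENNReal.ofReal_mul (by positivity),
    ← ENNReal.ofReal_add (by positivity) (by positivity)]
  apply ENNReal.ofReal_le_ofReal
  have : v * ‖z‖ ^ 2 + v⁻¹ * ‖y‖ ^ 2 - 2 * (‖z‖ * ‖y‖) = v⁻¹ * (v * ‖z‖ - ‖y‖) ^ 2 := by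
    field_simp
    ring
  have h2 : 0 ≤ v⁻¹ * (v * ‖z‖ - ‖y‖) ^ 2 := by positivity
  linarith

/-- Duality: a weighted bound for the dual operator bounds the linearized maximal operator. -/
theorem lintegral_extOp_sq_le {p t w : ℝ → ℝ} {g : ℝ → ℂ} {C : ℝ} (hC : 0 < C)
    (hp : Measurable p) (ht : Measurable t) (hw : Measurable w) (hw0 : ∀ ξ, 0 < w ξ)
    (hgm : Measurable g) (hg : Integrable g)
    (H : ∀ h : ℝ → ℂ, Measurable h → Integrable h →
      ∫⁻ ξ, ENNReal.ofReal ((w ξ)⁻¹) * ‖dualOp p t h ξ‖ₑ ^ 2 ≤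
        ENNReal.ofReal C * ∫⁻ x, ‖h x‖ₑ ^ 2) :
    ∫⁻ x, ‖extOp p g x (t x)‖ₑ ^ 2 ≤
      ENNReal.ofReal C * ∫⁻ ξ, ENNReal.ofReal (w ξ) * ‖g ξ‖ₑ ^ 2 := by
  have hSm : Measurable fun x => extOp p g x (t x) :=
    (continuous_extOp hp hgm hg).measurable.comp (measurable_id.prodMk ht)
  have hball : ∀ n : ℕ, ∫⁻ x in Metric.closedBall (0 : ℝ) n, ‖extOp p g x (t x)‖ₑ ^ 2 ≤
      ENNReal.ofReal C * ∫⁻ ξ, ENNReal.ofReal (w ξ) * ‖g ξ‖ₑ ^ 2 := by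
    intro n
    set B : Set ℝ := Metric.closedBall (0 : ℝ) n with hB
    have hBm : MeasurableSet B := measurableSet_closedBall
    set h : ℝ → ℂ := B.indicator fun x => (starRingEnd ℂ) (extOp p g x (t x)) with hh
    have hhm : Measurable h := Measurable.indicator (by fun_prop) hBm
    have hbd : ∀ x, ‖h x‖ ≤ B.indicator (fun _ => ∫ ξ, ‖g ξ‖) x := by
      intro x
      by_cases hx : x ∈ B
      · simp only [hh, Set.indicator_of_mem hx, RCLike.norm_conj]
        exact norm_extOp_le _ _ _ _
      · simp [hh, Set.indicator_of_notMem hx]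
    have hBfin : volume B ≠ ⊤ := (isCompact_closedBall _ _).measure_lt_top.ne
    have hhi : Integrable h := Integrable.mono' (integrable_indicator_iff hBm |>.2
      (integrableOn_const hBfin)) hhm.aestronglyMeasurable (Filter.Eventually.of_forall hbd)
    have hh2i : Integrable fun x => ‖h x‖ ^ 2 := by
      refine Integrable.mono' (hhi.norm.mul_const (∫ ξ, ‖g ξ‖))
        (by apply Measurable.aestronglyMeasurable; fun_prop) (Filter.Eventually.of_forall fun x => ?_)
      rw [Real.norm_of_nonneg (by positivity), sq]
      gcongr
      refine (hbd x).trans (Set.indicator_le_self' (fun x _ => ?_) x)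
      exact integral_nonneg fun _ => norm_nonneg _
    set X : ENNReal := ∫⁻ x, ‖h x‖ₑ ^ 2 with hX
    set A : ENNReal := ∫⁻ ξ, ENNReal.ofReal (w ξ) * ‖g ξ‖ₑ ^ 2 with hA
    have hXB : ∫⁻ x in B, ‖extOp p g x (t x)‖ₑ ^ 2 = X := by
      rw [hX, ← lintegral_indicator hBm]
      congr 1
      ext x
      by_cases hx : x ∈ B
      · simp only [hh, Set.indicator_of_mem hx, RCLike.enorm_conj]
      · simp [hh, Set.indicator_of_notMem hx]
    have hXr : X = ENNReal.ofReal (∫ x, ‖h x‖ ^ 2) := by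
      rw [ofReal_integral_eq_lintegral_ofReal hh2i
        (Filter.Eventually.of_forall fun x => by positivity)]
      simp_rw [ENNReal.ofReal_pow (norm_nonneg _), ofReal_norm]
      rfl
    have hXtop : X ≠ ⊤ := by rw [hXr]; exact ENNReal.ofReal_ne_top
    have hdual : X = ‖∫ ξ, g ξ * dualOp p t h ξ‖ₑ := by
      rw [← integral_mul_extOp hp ht hgm hg hhm hhi]
      have : ∀ x, h x * extOp p g x (t x) = ((‖h x‖ ^ 2 : ℝ) : ℂ) := by
        intro x
        by_cases hx : x ∈ B
        · simp only [hh, Set.indicator_of_mem hx, RCLike.norm_conj]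
          rw [mul_comm, Complex.mul_conj, Complex.normSq_eq_norm_sq]
        · simp [hh, Set.indicator_of_notMem hx]
      simp_rw [this]
      rw [integral_complex_ofReal, ← ofReal_norm, Complex.norm_real, Real.norm_of_nonneg
        (integral_nonneg fun x => by positivity), hXr]
    have hDm : Measurable (dualOp p t h) := measurable_dualOp hp ht hhm
    have h2X : 2 * X ≤ ENNReal.ofReal C * A + X := by
      calc 2 * X ≤ 2 * ∫⁻ ξ, ‖g ξ‖ₑ * ‖dualOp p t h ξ‖ₑ := by
            gcongr
            rw [hdual]
            refine (enorm_integral_le_lintegral_enorm _).trans (le_of_eq ?_)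
            simp_rw [enorm_mul]
        _ = ∫⁻ ξ, 2 * (‖g ξ‖ₑ * ‖dualOp p t h ξ‖ₑ) := by
            rw [lintegral_const_mul _ (by fun_prop)]
        _ ≤ ∫⁻ ξ, (ENNReal.ofReal C * (ENNReal.ofReal (w ξ) * ‖g ξ‖ₑ ^ 2) +
            ENNReal.ofReal C⁻¹ * (ENNReal.ofReal ((w ξ)⁻¹) * ‖dualOp p t h ξ‖ₑ ^ 2)) := by
            refine lintegral_mono fun ξ => ?_
            refine (two_mul_enorm_mul_le (mul_pos hC (hw0 ξ)) _ _).trans (le_of_eq ?_)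
            rw [mul_inv, ENNReal.ofReal_mul hC.le, ENNReal.ofReal_mul (inv_nonneg.2 hC.le),
              mul_assoc, mul_assoc]
        _ = ENNReal.ofReal C * A + ENNReal.ofReal C⁻¹ *
            ∫⁻ ξ, ENNReal.ofReal ((w ξ)⁻¹) * ‖dualOp p t h ξ‖ₑ ^ 2 := by
            rw [lintegral_add_left (by fun_prop), lintegral_const_mul _ (by fun_prop),
              lintegral_const_mul _ (by fun_prop)]
        _ ≤ ENNReal.ofReal C * A + ENNReal.ofReal C⁻¹ * (ENNReal.ofReal C * X) := by
            gcongr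
            exact H h hhm hhi
        _ = _ := by
            rw [← mul_assoc, ← ENNReal.ofReal_mul (inv_nonneg.2 hC.le), inv_mul_cancel₀ hC.ne',
              ENNReal.ofReal_one, one_mul]
    rw [hXB]
    rw [two_mul] at h2X
    exact (ENNReal.add_le_add_iff_right hXtop).1 h2X
  rw [← setLIntegral_univ, ← Metric.iUnion_closedBall_nat (0 : ℝ),
    setLIntegral_iUnion_of_directed]
  · exact iSup_le hball
  · exact (monotone_nat_of_le_succ fun n =>
      Metric.closedBall_subset_closedBall (by push_cast; linarith)).directed_le

/-- A measurable time at which the maximal function is nearly attained. -/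
theorem exists_measurable_time {p : ℝ → ℝ} {g : ℝ → ℂ} (hp : Measurable p) (hgm : Measurable g)
    (hg : Integrable g) : ∃ t : ℝ → ℝ, Measurable t ∧ (∀ x, |t x| ≤ 1) ∧
      ∀ x, (⨆ τ : Set.Ioo (-1 : ℝ) 1, ‖extOp p g x τ‖) ≤ 2 * ‖extOp p g x (t x)‖ := by
  have hc := continuous_extOp hp hgm hg
  have : Nonempty (Set.Ioo (-1 : ℝ) 1) := ⟨⟨0, by norm_num⟩⟩
  have hbdd : ∀ x, BddAbove (Set.range fun τ : Set.Ioo (-1 : ℝ) 1 => ‖extOp p g x τ‖) := fun x =>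
    ⟨∫ ξ, ‖g ξ‖, by rintro _ ⟨τ, rfl⟩; exact norm_extOp_le _ _ _ _⟩
  have hFm : Measurable fun x => ⨆ τ : Set.Ioo (-1 : ℝ) 1, ‖extOp p g x τ‖ := by
    refine (lowerSemicontinuous_ciSup hbdd fun τ => Continuous.lowerSemicontinuous ?_).measurable
    exact (hc.comp (continuous_id.prodMk continuous_const)).norm
  set q : ℕ → Set.Ioo (-1 : ℝ) 1 := TopologicalSpace.denseSeq _ with hq
  have hex : ∀ x, ∃ n, (⨆ τ : Set.Ioo (-1 : ℝ) 1, ‖extOp p g x τ‖) ≤ 2 * ‖extOp p g x (q n)‖ := by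
    intro x
    set F := ⨆ τ : Set.Ioo (-1 : ℝ) 1, ‖extOp p g x τ‖ with hF
    rcases le_or_gt F 0 with h0 | h0
    · exact ⟨0, h0.trans (by positivity)⟩
    obtain ⟨τ, hτ⟩ := exists_lt_of_lt_ciSup (half_lt_self h0)
    have ho : IsOpen {τ : Set.Ioo (-1 : ℝ) 1 | F / 2 < ‖extOp p g x τ‖} :=
      isOpen_lt continuous_const
        (hc.comp (continuous_const.prodMk continuous_subtype_val)).norm
    obtain ⟨n, hn⟩ := (TopologicalSpace.denseRange_denseSeq _).exists_mem_open ho ⟨τ, hτ⟩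
    have hn' : F / 2 < ‖extOp p g x (q n)‖ := hn
    exact ⟨n, by linarith⟩
  classical
  refine ⟨fun x => q (Nat.find (hex x)), ?_, fun x => ?_, fun x => Nat.find_spec (hex x)⟩
  · have hfind := measurable_find hex fun k => measurableSet_le hFm
      ((hc.comp (continuous_id.prodMk continuous_const)).norm.measurable.const_mul 2)
    exact (measurable_from_nat (f := fun n => (q n : ℝ))).comp hfind
  · have := (q (Nat.find (hex x))).2
    exact abs_le.2 ⟨this.1.le, this.2.le⟩

theorem exists_schwartzMap_FT1 {f : ℝ → ℂ} (hf : ContDiff ℝ (⊤ : ℕ∞) f)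
    (hc : HasCompactSupport f) : ∃ ψ : SchwartzMap ℝ ℂ, ∀ ξ, FT1 f ξ = ψ (ξ / (2 * π)) := by
  refine ⟨FourierTransform.fourier (hc.toSchwartzMap hf), fun ξ => ?_⟩
  rw [SchwartzMap.fourier_coe, Real.fourier_real_eq_integral_exp_smul, FT1]
  congr 1
  ext x
  rw [smul_eq_mul, HasCompactSupport.toSchwartzMap_toFun]
  congr 2
  have : -2 * π * x * (ξ / (2 * π)) = -(x * ξ) := by
    field_simp
  rw [this]
  push_cast
  ring

theorem integrable_weight_mul_norm_sq {g : ℝ → ℂ} {ψ : SchwartzMap ℝ ℂ} {r : ℝ} (hr : r ≠ 0)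
    (hg : ∀ ξ, g ξ = ψ (ξ / r)) (s : ℝ) :
    Integrable fun ξ => (1 + |ξ| ^ 2) ^ s * ‖g ξ‖ ^ 2 := by
  have hgc : Continuous g := by
    rw [funext hg]
    exact ψ.continuous.comp (continuous_id.div_const r)
  obtain ⟨M, hM⟩ : ∃ M, ∀ ξ, ‖g ξ‖ ≤ M := by
    obtain ⟨M, -, hM⟩ := ψ.decay 0 0
    refine ⟨M, fun ξ => ?_⟩
    have := hM (ξ / r)
    rw [pow_zero, one_mul, norm_iteratedFDeriv_zero] at this
    rw [hg]
    exact this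
  have hmom : ∀ k : ℕ, Integrable fun ξ => |ξ| ^ k * ‖g ξ‖ := by
    intro k
    have := ((ψ.integrable_pow_mul volume k).comp_div hr).const_mul (|r| ^ k)
    refine this.congr (Filter.Eventually.of_forall fun ξ => ?_)
    simp only [hg, Real.norm_eq_abs, abs_div, div_pow]
    have : |r| ≠ 0 := abs_ne_zero.2 hr
    field_simp
  set n := ⌈s⌉₊ with hn
  refine Integrable.mono' (((hmom 0).add (hmom (2 * n))).const_mul (2 ^ (n - 1) * M)) ?_
    (Filter.Eventually.of_forall fun ξ => ?_)
  · apply Measurable.aestronglyMeasurable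
    have := hgc.measurable
    fun_prop
  have h1 : (1 + |ξ| ^ 2) ^ s ≤ 2 ^ (n - 1) * (1 + |ξ| ^ (2 * n)) := by
    calc (1 + |ξ| ^ 2) ^ s ≤ (1 + |ξ| ^ 2) ^ (n : ℝ) :=
          Real.rpow_le_rpow_of_exponent_le (by linarith [sq_nonneg |ξ|]) (Nat.le_ceil s)
      _ = (1 + |ξ| ^ 2) ^ n := Real.rpow_natCast _ _
      _ ≤ 2 ^ (n - 1) * (1 ^ n + (|ξ| ^ 2) ^ n) := add_pow_le zero_le_one (by positivity) n
      _ = _ := by rw [one_pow, ← pow_mul]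
  rw [Real.norm_of_nonneg (by positivity)]
  calc (1 + |ξ| ^ 2) ^ s * ‖g ξ‖ ^ 2
      ≤ (2 ^ (n - 1) * (1 + |ξ| ^ (2 * n))) * (M * ‖g ξ‖) := by
        rw [sq ‖g ξ‖]
        gcongr
        exact hM ξ
    _ = _ := by
        simp only [Pi.add_apply, pow_zero]
        ring

theorem integral_le_of_lintegral_ofReal_le {F : ℝ → ℝ} {B : ℝ} (hF : ∀ x, 0 ≤ F x) (hB : 0 ≤ B)
    (h : ∫⁻ x, ENNReal.ofReal (F x) ≤ ENNReal.ofReal B) : ∫ x, F x ≤ B := by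
  by_cases hi : Integrable F
  · rw [← ofReal_integral_eq_lintegral_ofReal hi (Filter.Eventually.of_forall hF)] at h
    exact (ENNReal.ofReal_le_ofReal_iff hB).1 h
  · rwa [integral_undef hi]

theorem norm_Sosc1_le (a : ℝ) (f : ℝ → ℂ) (x t : ℝ) :
    ‖Sosc1 a f x t‖ ≤ ‖extOp (fun ξ => |ξ| ^ a) (FT1 f) x t‖ := by
  rw [Sosc1, norm_mul]
  refine mul_le_of_le_one_left (norm_nonneg _) ?_
  rw [norm_inv, Complex.norm_real, Real.norm_of_nonneg (by positivity)]
  exact inv_le_one_of_one_le₀ (by linarith [Real.pi_gt_three])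

theorem stmt5 (a : ℝ) (ha : 0 < a) (ha1 : a ≠ 1) (s : ℝ) (hs : a / 4 < s) :
    ∃ C > 0, ∀ f : ℝ → ℂ,
      ContDiff ℝ (⊤ : ℕ∞) f → HasCompactSupport f → 0 ∉ tsupport f →
      (∫ x, (⨆ t : Set.Ioo (-1 : ℝ) 1, ‖Sosc1 a f x t‖) ^ 2) ^ (1/2 : ℝ)
        ≤ C * (∫ ξ, (1 + |ξ| ^ 2) ^ s * ‖FT1 f ξ‖ ^ 2) ^ (1/2 : ℝ) := by
  obtain ⟨C, hC, H⟩ := exists_lintegral_weight_dualOp_le ha ha1 hs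
  refine ⟨(4 * C) ^ (1 / 2 : ℝ), by positivity, fun f hf hc _ => ?_⟩
  obtain ⟨ψ, hψ⟩ := exists_schwartzMap_FT1 hf hc
  have hpi : 2 * π ≠ 0 := by positivity
  have hA := integrable_weight_mul_norm_sq hpi hψ s
  have hg : Integrable (FT1 f) := by
    rw [funext hψ]
    exact ψ.integrable.comp_div hpi
  have hgm : Measurable (FT1 f) := by
    rw [funext hψ]
    exact (ψ.continuous.comp (continuous_id.div_const _)).measurable
  have hp : Measurable fun ξ : ℝ => |ξ| ^ a := by fun_prop
  obtain ⟨t, ht, ht1, hFt⟩ := exists_measurable_time hp hgm hg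
  have hlin := lintegral_extOp_sq_le (w := fun ξ => (1 + |ξ| ^ 2) ^ s) hC hp ht (by fun_prop)
    (fun ξ => by positivity) hgm hg fun h hhm hhi => by
      have := H t h ht ht1 hhm hhi
      simp_rw [fun ξ : ℝ => Real.rpow_neg (by positivity : 0 ≤ 1 + |ξ| ^ 2) s] at this
      exact this
  have hA' : ∫⁻ ξ, ENNReal.ofReal ((1 + |ξ| ^ 2) ^ s) * ‖FT1 f ξ‖ₑ ^ 2 =
      ENNReal.ofReal (∫ ξ, (1 + |ξ| ^ 2) ^ s * ‖FT1 f ξ‖ ^ 2) := by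
    rw [ofReal_integral_eq_lintegral_ofReal hA (Filter.Eventually.of_forall fun ξ => by positivity)]
    congr 1
    ext ξ
    rw [ENNReal.ofReal_mul (by positivity), ENNReal.ofReal_pow (norm_nonneg _), ofReal_norm]
  have hA0 : 0 ≤ ∫ ξ, (1 + |ξ| ^ 2) ^ s * ‖FT1 f ξ‖ ^ 2 := integral_nonneg fun ξ => by positivity
  have hbdd : ∀ x, BddAbove (Set.range fun τ : Set.Ioo (-1 : ℝ) 1 =>
      ‖extOp (fun ξ => |ξ| ^ a) (FT1 f) x τ‖) := fun x =>
    ⟨∫ ξ, ‖FT1 f ξ‖, by rintro _ ⟨τ, rfl⟩; exact norm_extOp_le _ _ _ _⟩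
  have hsup0 : ∀ x, 0 ≤ ⨆ τ : Set.Ioo (-1 : ℝ) 1, ‖Sosc1 a f x τ‖ := fun x =>
    Real.iSup_nonneg fun τ => norm_nonneg _
  rw [← Real.mul_rpow (by positivity) hA0]
  refine Real.rpow_le_rpow (integral_nonneg fun x => by positivity) ?_ (by norm_num)
  refine integral_le_of_lintegral_ofReal_le (fun x => by positivity) (by positivity) ?_
  calc ∫⁻ x, ENNReal.ofReal ((⨆ τ : Set.Ioo (-1 : ℝ) 1, ‖Sosc1 a f x τ‖) ^ 2)
      ≤ ∫⁻ x, 4 * ‖extOp (fun ξ => |ξ| ^ a) (FT1 f) x (t x)‖ₑ ^ 2 := by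
        refine lintegral_mono fun x => ?_
        have h1 : (⨆ τ : Set.Ioo (-1 : ℝ) 1, ‖Sosc1 a f x τ‖) ≤
            2 * ‖extOp (fun ξ => |ξ| ^ a) (FT1 f) x (t x)‖ :=
          (ciSup_mono (hbdd x) fun τ => norm_Sosc1_le a f x τ).trans (hFt x)
        rw [← ofReal_norm, ← ENNReal.ofReal_pow (norm_nonneg _), ← ENNReal.ofReal_ofNat,
          ← ENNReal.ofReal_mul (by norm_num)]
        apply ENNReal.ofReal_le_ofReal
        calc _ ≤ (2 * ‖extOp (fun ξ => |ξ| ^ a) (FT1 f) x (t x)‖) ^ 2 :=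
              pow_le_pow_left₀ (hsup0 x) h1 2
          _ = _ := by ring
    _ = 4 * ∫⁻ x, ‖extOp (fun ξ => |ξ| ^ a) (FT1 f) x (t x)‖ₑ ^ 2 :=
        lintegral_const_mul' _ _ (by norm_num)
    _ ≤ 4 * (ENNReal.ofReal C * ∫⁻ ξ, ENNReal.ofReal ((1 + |ξ| ^ 2) ^ s) * ‖FT1 f ξ‖ₑ ^ 2) := by
        gcongr
    _ = _ := by
        rw [hA', ENNReal.ofReal_mul (by positivity), ENNReal.ofReal_mul (by norm_num),
          ENNReal.ofReal_ofNat, mul_assoc]
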